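/- Any two injective Lie algebra homomorphisms ε, ε' from the complex simple Lie algebra e₇ to the complex simple Lie algebra e₈ are conjugate by an automorphism of e₈: there exists a Lie algebra automorphism φ of e₈ such that ε' = φ ∘ ε. -/

import Mathlib

/-!
Every embedding `ε` of `e₇` into `e₈` is the standard embedding, given by the inclusion of Dynkin
diagrams, followed by an automorphism of `e₈`; this implies the theorem. The automorphism is found
by extending the images of the Chevalley generators of `e₇` to a system of Chevalley generators of
type `E₈` inside `e₈`.

Since `e₈` is defined by the Serre presentation, its structure has to be established first. The
presentation has a triangular decomposition (`std_span`), its generators are locally `ad`-nilpotent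
(`std_locNil`), and the resulting simple reflections preserve weight multiplicities
(`Chev.rank_W_refl`). As the Cartan matrix is positive definite, every nonzero weight is conjugate to
a simple root and has multiplicity at most one, so `dim e₈ ≤ 8 + 240 = 248` (`e8_span`). The same
descent applied to the weights of an ideal shows that `e₈` is simple unless it is zero
(`e8_isSimple`), and the zero case is trivial for the theorem.

The images of the Chevalley generators of `e₇` under `ε` form a system `C` of type `E₇` in `e₈`. The
`126` root weights of `E₇` occur in `e₈` with a common multiplicity `m ≥ 1`, and
`126 m ≤ 248` forces `m = 1` (`finrank_W7_eq_one`). The elements `h i` lie in a Cartan subalgebra of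
`e₈` (`exists_cartan`) and, the multiplicities being one, the vectors `e i` and `f i` are root
vectors for it (`exists_root`). Thus the irreducible root system of `e₈` contains roots
`a 0, …, a 6` with Cartan matrix `E₇`.

Since `dim e₈ ≥ 134` (`e8_finrank_ge`), that root system has more roots than `E₇`. By irreducibility
some root restricts to the minuscule weight of `E₇` (`exists_minuscule`), and its negative extends the
diagram of the `a i` to the diagram `E₈` (`exists_extending`). An `sl₂`-triple for this root extends
`C` to a system of type `E₈` (`exists_extension`). The universal property of the Serre presentation
(`exists_lift`) gives an endomorphism of `e₈` carrying the standard generators to this system, which is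
an automorphism by simplicity and takes the standard embedding to `ε` (`exists_conj`).
-/

/-! ### Operators satisfying the sl₂ relations -/

namespace E7E8

section SL2

variable {V : Type*} [AddCommGroup V] [Module ℂ V]

/-- Operators `E, F, H` on a complex vector space satisfying the `sl₂` relations. -/
structure Sl2Ops (E F H : Module.End ℂ V) : Prop where
  HE : H * E = E * H + (2 : ℂ) • E
  HF : H * F = F * H - (2 : ℂ) • F
  EF : E * F = F * E + H

namespace Sl2Ops

variable {E F H : Module.End ℂ V}

theorem swap (S : Sl2Ops E F H) : Sl2Ops F E (-H) where
  HE := by rw [neg_mul, S.HF]; simp [mul_neg]; abel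
  HF := by rw [neg_mul, S.HE]; simp [mul_neg]; abel
  EF := by rw [S.EF]; abel

theorem HE_apply (S : Sl2Ops E F H) (x : V) : H (E x) = E (H x) + (2 : ℂ) • E x := by
  simpa using congrArg (fun T : Module.End ℂ V => T x) S.HE

theorem HF_apply (S : Sl2Ops E F H) (x : V) : H (F x) = F (H x) - (2 : ℂ) • F x := by
  simpa using congrArg (fun T : Module.End ℂ V => T x) S.HF

theorem EF_apply (S : Sl2Ops E F H) (x : V) : E (F x) = F (E x) + H x := by
  simpa using congrArg (fun T : Module.End ℂ V => T x) S.EF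

theorem H_E_pow (S : Sl2Ops E F H) (n : ℕ) (x : V) :
    H ((E ^ n) x) = (E ^ n) (H x) + (2 * n : ℂ) • (E ^ n) x := by
  induction n generalizing x with
  | zero => simp
  | succ n ih =>
    rw [pow_succ, Module.End.mul_apply, ih, S.HE_apply]
    simp only [map_add, map_smul, Module.End.mul_apply, Nat.cast_succ]
    module

theorem H_F_pow (S : Sl2Ops E F H) (n : ℕ) (x : V) :
    H ((F ^ n) x) = (F ^ n) (H x) - (2 * n : ℂ) • (F ^ n) x := by
  have := S.swap.H_E_pow n x
  simp only [LinearMap.neg_apply, map_neg] at this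
  rw [neg_eq_iff_eq_neg] at this
  rw [this]; module

theorem E_F_pow (S : Sl2Ops E F H) (n : ℕ) (x : V) :
    E ((F ^ (n + 1)) x) =
      (F ^ (n + 1)) (E x) + ((n : ℂ) + 1) • (F ^ n) (H x - (n : ℂ) • x) := by
  induction n generalizing x with
  | zero => simp [S.EF_apply]
  | succ n ih =>
    rw [pow_succ, Module.End.mul_apply, ih, S.EF_apply, S.HF_apply]
    simp only [map_add, map_sub, map_smul, pow_succ, Module.End.mul_apply, Nat.cast_succ]
    module

theorem F_E_pow (S : Sl2Ops E F H) (n : ℕ) (x : V) :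
    F ((E ^ (n + 1)) x) =
      (E ^ (n + 1)) (F x) - ((n : ℂ) + 1) • (E ^ n) (H x + (n : ℂ) • x) := by
  have := S.swap.E_F_pow n x
  rw [this]; simp only [LinearMap.neg_apply, map_sub, map_neg, map_add, map_smul]; module

/-- On a space where `E` is locally nilpotent, `F ^ k` is injective on vectors of weight `k`. -/
theorem inj (S : Sl2Ops E F H) (hE : ∀ x, ∃ n, (E ^ n) x = 0) {k : ℕ} {x : V}
    (hx : H x = (k : ℂ) • x) (hF : (F ^ k) x = 0) : x = 0 := by
  suffices P : ∀ i, i ≤ k → ∀ x : V, H x = (k : ℂ) • x → (F ^ i) x = 0 → x = 0 from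
    P k le_rfl x hx hF
  intro i
  induction i with
  | zero => intro _ x _ h; simpa using h
  | succ i ih =>
    intro hik x hx h
    have hHFE : H (F (E x)) = (k : ℂ) • F (E x) := by
      rw [S.HF_apply, S.HE_apply, hx]; simp only [map_add, map_smul]; module
    set c : ℂ := ((i : ℂ) + 1) * ((k : ℂ) - i) with hc
    have h1 : F (E x) + c • x = 0 := by
      apply ih (by omega)
      · rw [map_add, map_smul, hHFE, hx]; module
      · have := S.E_F_pow i x
        rw [h, map_zero, hx, pow_succ, Module.End.mul_apply] at this
        rw [map_add, map_smul, hc]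
        simp only [map_sub, map_smul] at this
        rw [this]; module
    have hcn : ∃ m : ℕ, 0 < m ∧ c = m := by
      refine ⟨(i + 1) * (k - i), Nat.mul_pos (by omega) (by omega), ?_⟩
      rw [hc, Nat.cast_mul, Nat.cast_sub (by omega)]; push_cast; ring
    obtain ⟨m, hm, hcm⟩ := hcn
    obtain ⟨N, hN⟩ := hE x
    -- descend on the nilpotency exponent
    have key : ∀ N, (E ^ N) x = 0 → x = 0 := by
      intro N
      induction N with
      | zero => intro h; simpa using h
      | succ N ihN =>
        intro h
        apply ihN
        have h4 : F (E x) = -(c • x) := eq_neg_of_add_eq_zero_left h1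
        have h0 := S.F_E_pow N x
        rw [h, map_zero] at h0
        have h6 : (E ^ (N+1)) (F x) = ((N : ℂ) + 1) • ((k : ℂ) + N) • (E ^ N) x := by
          rw [eq_comm, sub_eq_zero] at h0
          rw [h0, hx]; simp only [map_add, map_smul]; module
        -- `E^{N+1} F x = E^N (F E x + H x) = (k - c) E^N x`
        have h7 : (E ^ (N+1)) (F x) = ((k : ℂ) - c) • (E ^ N) x := by
          rw [pow_succ, Module.End.mul_apply, S.EF_apply, h4, hx]
          simp only [map_add, map_smul, map_neg]; module
        rw [h7, smul_smul, ← sub_eq_zero, ← sub_smul, smul_eq_zero] at h6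
        refine h6.resolve_left ?_
        rw [hcm]
        have : ((k : ℂ) - m - (N + 1) * (k + N)) = -((m + N * (k + N + 1) : ℕ) : ℂ) := by
          push_cast; ring
        rw [this, neg_eq_zero, Nat.cast_eq_zero]
        omega
    exact key N hN

/-- On a space where `E` is locally nilpotent there is no vector of positive weight
killed by `F`. -/
theorem eq_zero_of_lowest (S : Sl2Ops E F H) (hE : ∀ x, ∃ n, (E ^ n) x = 0) {k : ℕ} (hk : 0 < k)
    {x : V} (hx : H x = (k : ℂ) • x) (hF : F x = 0) : x = 0 := by
  apply S.inj hE hx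
  obtain ⟨k, rfl⟩ := Nat.exists_eq_succ_of_ne_zero hk.ne'
  rw [pow_succ, Module.End.mul_apply, hF, map_zero]

open Polynomial in
/-- For a vector `u` killed by `E`, the vector `E ^ n (F ^ n u)` is `n! H (H - 1) ⋯ (H - n + 1) u`. -/
theorem E_pow_F_pow (S : Sl2Ops E F H) (n : ℕ) {u : V} (hu : E u = 0) :
    (E ^ n) ((F ^ n) u) =
      (aeval H (C (n.factorial : ℂ) * ∏ j ∈ Finset.range n, (X - C (j : ℂ)))) u := by
  induction n generalizing u with
  | zero => simp
  | succ n ih =>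
    have h1 : E (H u - (n : ℂ) • u) = 0 := by
      have := S.HE_apply u
      rw [hu, map_zero, smul_zero, add_zero] at this
      rw [map_sub, map_smul, hu, ← this]; simp
    rw [pow_succ E, Module.End.mul_apply, S.E_F_pow, hu, map_zero, zero_add, map_smul, ih h1,
      Finset.prod_range_succ]
    have h2 : H u - (n : ℂ) • u = (aeval H (X - C (n : ℂ))) u := by
      rw [map_sub, aeval_X, aeval_C, LinearMap.sub_apply, Module.algebraMap_end_apply]
    rw [h2, ← Module.End.mul_apply, ← map_mul]
    have h3 : C (((n + 1).factorial : ℕ) : ℂ) *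
        ((∏ j ∈ Finset.range n, (X - C (j : ℂ))) * (X - C (n : ℂ))) =
        C ((n : ℂ) + 1) * (C (n.factorial : ℂ) * (∏ j ∈ Finset.range n, (X - C (j : ℂ))) *
          (X - C (n : ℂ))) := by
      rw [Nat.factorial_succ, Nat.cast_mul, C_mul]; push_cast; ring
    rw [h3, map_mul (aeval H) (C ((n : ℂ) + 1)), aeval_C, Module.End.mul_apply,
      Module.algebraMap_end_apply]

open Polynomial in
/-- `H` acts semisimply at the eigenvalue `0`. -/
theorem H_eq_zero (S : Sl2Ops E F H) (hE : ∀ x, ∃ n, (E ^ n) x = 0)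
    (hF : ∀ x, ∃ n, (F ^ n) x = 0) {x : V} (hx : H (H x) = 0) : H x = 0 := by
  obtain ⟨M, hM⟩ := hE x
  induction M generalizing x with
  | zero => simp at hM; simp [hM]
  | succ M ih =>
    set u := (E ^ M) x with hu
    have hEu : E u = 0 := by rw [hu, ← Module.End.mul_apply, ← pow_succ', hM]
    set w := (E ^ M) (H x) with hw
    have hHu : H u = (2 * M : ℂ) • u + w := by rw [hu, S.H_E_pow]; abel
    have hHw : H w = (2 * M : ℂ) • w := by rw [hw, S.H_E_pow, hx]; simp
    have hw0 : w = 0 := by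
      obtain ⟨n₀, hn₀⟩ := hF u
      set n := n₀ + (2 * M + 1)
      have hn : (F ^ n) u = 0 := by
        rw [show n = (2*M+1) + n₀ by omega, pow_add, Module.End.mul_apply, hn₀, map_zero]
      have h1 := S.E_pow_F_pow n hEu
      rw [hn, map_zero, ← Finset.prod_erase_mul (Finset.range n) _
        (Finset.mem_range.2 (show 2 * M < n by omega)), ← mul_assoc, map_mul,
        Module.End.mul_apply] at h1
      have h2 : (aeval H (X - C ((2 * M : ℕ) : ℂ))) u = w := by
        simp only [map_sub, aeval_X, aeval_C, LinearMap.sub_apply, hHu,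
          Module.algebraMap_end_apply]; push_cast; abel
      rw [h2] at h1
      by_contra hne
      have hev : H.HasEigenvector (2 * M : ℂ) w :=
        ⟨Module.End.mem_eigenspace_iff.2 hHw, hne⟩
      rw [Module.End.aeval_apply_of_hasEigenvector hev] at h1
      have := (smul_eq_zero.1 h1.symm).resolve_right hne
      rw [eval_mul, eval_C, mul_eq_zero, eval_prod, Finset.prod_eq_zero_iff] at this
      rcases this with h | ⟨j, hj, h⟩
      · exact Nat.factorial_ne_zero _ (by exact_mod_cast h)
      · rw [eval_sub, eval_X, eval_C, sub_eq_zero] at h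
        exact (Finset.mem_erase.1 hj).1 (by exact_mod_cast h.symm)
    rw [hw0, add_zero] at hHu
    have h3 : ∃ c : ℂ, c ≠ 0 ∧ (E ^ M) ((F ^ M) u) = c • u := by
      rw [S.E_pow_F_pow M hEu]
      by_cases hu0 : u = 0
      · exact ⟨1, one_ne_zero, by rw [hu0]; simp⟩
      · have hev : H.HasEigenvector (2 * M : ℂ) u :=
          ⟨Module.End.mem_eigenspace_iff.2 hHu, hu0⟩
        refine ⟨_, ?_, Module.End.aeval_apply_of_hasEigenvector hev⟩
        rw [eval_mul, eval_C, mul_ne_zero_iff, eval_prod, Finset.prod_ne_zero_iff]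
        refine ⟨by exact_mod_cast Nat.factorial_ne_zero _, fun j hj => ?_⟩
        rw [eval_sub, eval_X, eval_C, sub_ne_zero]
        have := Finset.mem_range.1 hj
        intro h
        have : 2 * M = j := by exact_mod_cast h
        omega
    obtain ⟨c, hc, hcu⟩ := h3
    have hcomm : ∀ y, H ((F ^ M) ((E ^ M) y)) = (F ^ M) ((E ^ M) (H y)) := by
      intro y
      rw [S.H_F_pow, S.H_E_pow]; simp only [map_add, map_smul]; abel
    have h4 := ih (x := x - c⁻¹ • (F ^ M) u)
      (by simp only [map_sub, map_smul, hx, hu, hcomm]; simp)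
      (by rw [map_sub, map_smul, hcu, smul_smul, inv_mul_cancel₀ hc, one_smul, ← hu, sub_self])
    rw [map_sub, map_smul, hu, hcomm, ← hw, hw0, map_zero, smul_zero, sub_zero] at h4
    exact h4

/-- The powers `E ^ n` are eigenvectors of `ad H` with distinct eigenvalues `2 n`, so only finitely
many of them are nonzero. -/
theorem isNilpotent_E [FiniteDimensional ℂ V] (S : Sl2Ops E F H) : IsNilpotent E := by
  by_contra hn
  have hne : ∀ n, E ^ n ≠ 0 := fun n h => hn ⟨n, h⟩
  have hE : ∀ n : ℕ, Module.End.HasEigenvalue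
      (LinearMap.mulLeft ℂ H - LinearMap.mulRight ℂ H) (2 * n : ℂ) := by
    intro n
    refine Module.End.hasEigenvalue_of_hasEigenvector (x := E ^ n)
      ⟨Module.End.mem_eigenspace_iff.2 ?_, hne n⟩
    ext x
    have := S.H_E_pow n x
    simp [this]
  have hfin := Module.End.finite_hasEigenvalue
    (LinearMap.mulLeft ℂ H - LinearMap.mulRight ℂ H)
  refine Set.infinite_of_injective_forall_mem (f := fun n : ℕ => (2 * n : ℂ)) ?_ hE hfin
  intro a b h
  simpa using h

theorem locNil_E [FiniteDimensional ℂ V] (S : Sl2Ops E F H) (x : V) : ∃ n, (E ^ n) x = 0 := by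
  obtain ⟨n, hn⟩ := S.isNilpotent_E
  exact ⟨n, by rw [hn]; rfl⟩

theorem locNil_F [FiniteDimensional ℂ V] (S : Sl2Ops E F H) (x : V) : ∃ n, (F ^ n) x = 0 :=
  S.swap.locNil_E x

end Sl2Ops

end SL2
end E7E8

/-! ### Chevalley systems and the Serre presentation -/

namespace E7E8

open LieAlgebra

section Chevalley

variable {n : ℕ} {A : Matrix (Fin n) (Fin n) ℤ} {L : Type*} [LieRing L] [LieAlgebra ℂ L]

/-- Elements `h i`, `e i`, `f i` of a Lie algebra satisfying all relations of the Serre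
presentation for `A`, except possibly the two families of `ad`-nilpotency relations. -/
structure Chev (A : Matrix (Fin n) (Fin n) ℤ) (L : Type*) [LieRing L] [LieAlgebra ℂ L] where
  h : Fin n → L
  e : Fin n → L
  f : Fin n → L
  hh : ∀ i j, ⁅h i, h j⁆ = 0
  ef : ∀ i, ⁅e i, f i⁆ = h i
  ef_ne : ∀ i j, i ≠ j → ⁅e i, f j⁆ = 0
  he : ∀ i j, ⁅h i, e j⁆ = (A i j : ℂ) • e j
  hf : ∀ i j, ⁅h i, f j⁆ = -((A i j : ℂ) • f j)

namespace Chev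

/-- The image of `C` under the Chevalley involution: `e` and `f` are exchanged and `h` is negated. -/
def swap (C : Chev A L) : Chev A L where
  h i := -C.h i
  e := C.f
  f := C.e
  hh i j := by simp [C.hh]
  ef i := by rw [← lie_skew, C.ef]
  ef_ne i j hij := by rw [← lie_skew, C.ef_ne j i hij.symm, neg_zero]
  he i j := by simp [C.hf]
  hf i j := by simp [C.he]

/-- Each index of a Chevalley system gives an `sl₂`-triple in the adjoint representation. -/
theorem sl2 (C : Chev A L) {i : Fin n} (hA : A i i = 2) :
    Sl2Ops (ad ℂ L (C.e i)) (ad ℂ L (C.f i)) (ad ℂ L (C.h i)) where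
  HE := by
    ext x
    simp [leibniz_lie (C.h i) (C.e i) x, C.he, hA, add_comm]
  HF := by
    ext x
    simp [leibniz_lie (C.h i) (C.f i) x, C.hf, hA]
    abel
  EF := by
    ext x
    simp [leibniz_lie (C.e i) (C.f i) x, C.ef, add_comm]

/-- All `ad (e i)` and `ad (f i)` are locally nilpotent. -/
def LocNil (C : Chev A L) : Prop :=
  ∀ i x, (∃ n, (ad ℂ L (C.e i) ^ n) x = 0) ∧ ∃ n, (ad ℂ L (C.f i) ^ n) x = 0

theorem locNil [FiniteDimensional ℂ L] (C : Chev A L) (hA : ∀ i, A i i = 2) : C.LocNil :=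
  fun i x => ⟨(C.sl2 (hA i)).locNil_E x, (C.sl2 (hA i)).locNil_F x⟩

theorem LocNil.swap {C : Chev A L} (h : C.LocNil) : C.swap.LocNil := fun i x => (h i x).symm

/-- The space of vectors of weight `χ` for the commuting elements `h i`. -/
def W (C : Chev A L) (χ : Fin n → ℂ) : Submodule ℂ L :=
  ⨅ i, (ad ℂ L (C.h i)).eigenspace (χ i)

theorem mem_W (C : Chev A L) {χ : Fin n → ℂ} {x : L} :
    x ∈ C.W χ ↔ ∀ i, ⁅C.h i, x⁆ = χ i • x := by
  simp [W, Submodule.mem_iInf]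

theorem swap_W (C : Chev A L) (χ : Fin n → ℂ) : C.swap.W χ = C.W (-χ) := by
  ext x
  simp only [mem_W, swap, neg_lie, Pi.neg_apply, neg_smul, neg_eq_iff_eq_neg]

theorem ad_h_comm (C : Chev A L) (i j : Fin n) :
    Commute (ad ℂ L (C.h i)) (ad ℂ L (C.h j)) := by
  refine LinearMap.ext fun x => ?_
  simp [leibniz_lie (C.h i) (C.h j) x, C.hh]

theorem W_indep (C : Chev A L) : iSupIndep C.W := by
  refine (Module.End.independent_iInf_maxGenEigenspace_of_forall_mapsTo
    (fun i => ad ℂ L (C.h i)) ?_).mono ?_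
  · intro i j φ
    exact Module.End.mapsTo_maxGenEigenspace_of_comm (C.ad_h_comm j i) φ
  · intro χ
    exact iInf_mono fun i => (Module.End.genEigenspace _ _).mono le_top

theorem eq_of_mem_W (C : Chev A L) {χ ψ : Fin n → ℂ} {x : L} (hx : x ≠ 0) (h₁ : x ∈ C.W χ)
    (h₂ : x ∈ C.W ψ) : χ = ψ := by
  funext i
  have := (C.mem_W.1 h₁ i).symm.trans (C.mem_W.1 h₂ i)
  exact smul_left_injective ℂ hx this

theorem h_mem_W (C : Chev A L) (i : Fin n) : C.h i ∈ C.W 0 :=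
  C.mem_W.2 fun j => by simp [C.hh]

theorem e_mem_W (C : Chev A L) (i : Fin n) : C.e i ∈ C.W (fun j => (A j i : ℂ)) :=
  C.mem_W.2 fun j => by simp [C.he]

theorem f_mem_W (C : Chev A L) (i : Fin n) : C.f i ∈ C.W (-fun j => (A j i : ℂ)) :=
  C.mem_W.2 fun j => by simp [C.hf]

theorem lie_mem_W (C : Chev A L) {χ ψ : Fin n → ℂ} {x y : L} (hx : x ∈ C.W χ) (hy : y ∈ C.W ψ) :
    ⁅x, y⁆ ∈ C.W (χ + ψ) := by
  rw [mem_W] at *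
  intro i
  rw [leibniz_lie, hx, hy, smul_lie, lie_smul, Pi.add_apply, add_smul]

theorem ad_e_pow_mem_W (C : Chev A L) {χ : Fin n → ℂ} {x : L} (hx : x ∈ C.W χ) (i : Fin n)
    (k : ℕ) : (ad ℂ L (C.e i) ^ k) x ∈ C.W (fun j => χ j + k * A j i) := by
  induction k with
  | zero => simpa using hx
  | succ k ih =>
    rw [pow_succ', Module.End.mul_apply, ad_apply]
    convert C.lie_mem_W (C.e_mem_W i) ih using 2
    funext j
    simp only [Pi.add_apply]
    push_cast; ring

/-- The reflection of a weight in the `i`-th simple root is realised by a linear map which is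
injective on the weight space and preserves all ideals. -/
theorem exists_refl (C : Chev A L) (hA : ∀ i, A i i = 2) (hC : C.LocNil) (i : Fin n)
    (χ : Fin n → ℂ) (k : ℤ) (hk : χ i = k) :
    ∃ T : Module.End ℂ L, (∀ x ∈ C.W χ, T x ∈ C.W (fun j => χ j - k * A j i)) ∧
      (∀ x ∈ C.W χ, T x = 0 → x = 0) ∧ ∀ (I : LieIdeal ℂ L) (x : L), x ∈ I → T x ∈ I := by
  -- it suffices to treat nonpositive weights; the other case follows by swapping `e` and `f`
  have main : ∀ (C : Chev A L) (_ : C.LocNil) (χ : Fin n → ℂ) (k : ℕ) (_ : χ i = -(k : ℂ)),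
      ∃ T : Module.End ℂ L, (∀ x ∈ C.W χ, T x ∈ C.W (fun j => χ j + k * A j i)) ∧
      (∀ x ∈ C.W χ, T x = 0 → x = 0) ∧ ∀ (I : LieIdeal ℂ L) (x : L), x ∈ I → T x ∈ I := by
    intro C hC χ k hk
    refine ⟨ad ℂ L (C.e i) ^ k, fun x hx => C.ad_e_pow_mem_W hx i k, ?_, ?_⟩
    · intro x hx h0
      refine (C.sl2 (hA i)).swap.inj (fun x => (hC i x).2) (k := k) ?_ h0
      rw [LinearMap.neg_apply, ad_apply, C.mem_W.1 hx i, hk, neg_smul, neg_neg]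
    · intro I x hx
      clear hk
      induction k with
      | zero => simpa using hx
      | succ k ih => rw [pow_succ', Module.End.mul_apply, ad_apply]; exact I.lie_mem ih
  rcases Int.eq_nat_or_neg k with ⟨m, rfl | rfl⟩
  · obtain ⟨T, h1, h2, h3⟩ := main C.swap hC.swap (-χ) m (by simp [hk])
    refine ⟨T, fun x hx => ?_, fun x hx => h2 x (by rwa [swap_W, neg_neg]), h3⟩
    have := h1 x (by rwa [swap_W, neg_neg])
    rw [swap_W] at this
    convert this using 2
    funext j
    simp; ring
  · obtain ⟨T, h1, h2, h3⟩ := main C hC χ m (by simp [hk])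
    refine ⟨T, fun x hx => ?_, h2, h3⟩
    convert h1 x hx using 2
    simp

/-- The weight attached to an integral combination of simple roots. -/
def wt (A : Matrix (Fin n) (Fin n) ℤ) (c : Fin n → ℤ) : Fin n → ℂ :=
  fun i => ((A.mulVec c i : ℤ) : ℂ)

/-- The `i`-th simple reflection, in the coordinates given by the simple roots. -/
def srefl (A : Matrix (Fin n) (Fin n) ℤ) (i : Fin n) (c : Fin n → ℤ) : Fin n → ℤ :=
  c - Pi.single i (A.mulVec c i)

theorem wt_refl (i : Fin n) (c : Fin n → ℤ) :
    wt A (srefl A i c) = fun j => wt A c j - ((A.mulVec c i : ℤ) : ℂ) * A j i := by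
  funext j
  simp [wt, srefl, Matrix.mulVec_sub]

theorem wt_neg (c : Fin n → ℤ) : wt A (-c) = -wt A c := by
  funext j; simp [wt, Matrix.mulVec_neg]

theorem wt_add (c d : Fin n → ℤ) : wt A (c + d) = wt A c + wt A d := by
  funext j; simp [wt, Matrix.mulVec_add]

theorem wt_zero : wt A 0 = 0 := by
  funext j; simp [wt]

theorem wt_single (i : Fin n) : wt A (Pi.single i 1) = fun j => (A j i : ℂ) := by
  funext j; simp [wt]

theorem refl_neg (i : Fin n) (c : Fin n → ℤ) : srefl A i (-c) = -srefl A i c := by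
  funext j
  by_cases h : j = i
  · subst h; simp [srefl, Matrix.mulVec_neg]; ring
  · simp [srefl, h]

theorem mulVec_refl (hA : ∀ i, A i i = 2) (i : Fin n) (c : Fin n → ℤ) :
    A.mulVec (srefl A i c) i = - A.mulVec c i := by
  simp [srefl, Matrix.mulVec_sub, hA]; ring

theorem refl_refl (hA : ∀ i, A i i = 2) (i : Fin n) (c : Fin n → ℤ) :
    srefl A i (srefl A i c) = c := by
  rw [srefl, mulVec_refl hA, srefl]
  funext j
  by_cases h : j = i
  · subst h; simp
  · simp [h]

theorem refl_single (hA : ∀ i, A i i = 2) (i : Fin n) :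
    srefl A i (Pi.single i 1) = -Pi.single i 1 := by
  funext j
  by_cases h : j = i
  · subst h; simp [srefl, hA]
  · simp [srefl, h]

theorem exists_refl_wt (C : Chev A L) (hA : ∀ i, A i i = 2) (hC : C.LocNil) (i : Fin n)
    (c : Fin n → ℤ) :
    ∃ T : Module.End ℂ L, (∀ x ∈ C.W (wt A c), T x ∈ C.W (wt A (srefl A i c))) ∧
      (∀ x ∈ C.W (wt A c), T x = 0 → x = 0) ∧
      ∀ (I : LieIdeal ℂ L) (x : L), x ∈ I → T x ∈ I := by
  rw [wt_refl]
  exact C.exists_refl hA hC i (wt A c) _ rfl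

theorem rank_W_le (C : Chev A L) (hA : ∀ i, A i i = 2) (hC : C.LocNil) (i : Fin n)
    (c : Fin n → ℤ) :
    Module.rank ℂ (C.W (wt A c)) ≤ Module.rank ℂ (C.W (wt A (srefl A i c))) := by
  obtain ⟨T, h1, h2, -⟩ := C.exists_refl_wt hA hC i c
  refine LinearMap.rank_le_of_injective (T.restrict h1) ?_
  rw [injective_iff_map_eq_zero]
  intro x hx
  exact Subtype.ext (h2 x x.2 (congrArg Subtype.val hx))

theorem rank_W_refl (C : Chev A L) (hA : ∀ i, A i i = 2) (hC : C.LocNil) (i : Fin n)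
    (c : Fin n → ℤ) :
    Module.rank ℂ (C.W (wt A (srefl A i c))) = Module.rank ℂ (C.W (wt A c)) := by
  refine le_antisymm ?_ (C.rank_W_le hA hC i c)
  conv_rhs => rw [← refl_refl hA i c]
  exact C.rank_W_le hA hC i _

/-- In a finite-dimensional Lie algebra the `ad`-nilpotency relations hold automatically. -/
theorem serre_e [FiniteDimensional ℂ L] (C : Chev A L) (hA : ∀ i, A i i = 2)
    (hA' : ∀ i j, i ≠ j → A i j ≤ 0) (i j : Fin n) :
    (ad ℂ L (C.e i) ^ (-A i j).toNat) ⁅C.e i, C.e j⁆ = 0 := by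
  by_cases hij : i = j
  · subst hij; simp
  obtain ⟨a, ha⟩ : ∃ a : ℕ, A i j = -(a : ℤ) := ⟨(-A i j).toNat, by have := hA' i j hij; omega⟩
  have hS := C.sl2 (hA i)
  have h0 : (-A i j).toNat = a := by omega
  rw [h0, ← ad_apply ℂ, ← Module.End.mul_apply, ← pow_succ]
  refine hS.eq_zero_of_lowest (fun x => hS.locNil_E x) (k := a + 2) (by omega) ?_ ?_
  · rw [hS.H_E_pow, ad_apply, C.he, ha]; push_cast; simp only [map_smul]; module
  · rw [hS.F_E_pow, ad_apply, ad_apply, C.he, ← lie_skew, C.ef_ne j i (Ne.symm hij), ha]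
    simp

theorem serre_f [FiniteDimensional ℂ L] (C : Chev A L) (hA : ∀ i, A i i = 2)
    (hA' : ∀ i j, i ≠ j → A i j ≤ 0) (i j : Fin n) :
    (ad ℂ L (C.f i) ^ (-A i j).toNat) ⁅C.f i, C.f j⁆ = 0 :=
  C.swap.serre_e hA hA' i j

end Chev

open CartanMatrix in
/-- The images of the generators in the Serre presentation. -/
noncomputable def gen (A : Matrix (Fin n) (Fin n) ℤ) (g : Generators (Fin n)) :
    A.ToLieAlgebra ℂ :=
  LieSubmodule.Quotient.mk' (Relations.toIdeal ℂ A) (FreeLieAlgebra.of ℂ g)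

/-- The quotient map from the free Lie algebra onto the Serre presentation. -/
noncomputable def proj (A : Matrix (Fin n) (Fin n) ℤ) :
    FreeLieAlgebra ℂ (CartanMatrix.Generators (Fin n)) →ₗ⁅ℂ⁆ A.ToLieAlgebra ℂ where
  toLinearMap := (LieSubmodule.Quotient.mk' (CartanMatrix.Relations.toIdeal ℂ A)).toLinearMap
  map_lie' := rfl

theorem proj_surj (A : Matrix (Fin n) (Fin n) ℤ) : Function.Surjective (proj A) :=
  LieSubmodule.Quotient.surjective_mk' _

theorem proj_eq_zero {A : Matrix (Fin n) (Fin n) ℤ} {x} :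
    proj A x = 0 ↔ x ∈ CartanMatrix.Relations.toIdeal ℂ A :=
  LieSubmodule.Quotient.mk_eq_zero' 

theorem proj_of (A : Matrix (Fin n) (Fin n) ℤ) (g) : proj A (FreeLieAlgebra.of ℂ g) = gen A g := rfl

theorem proj_rel {x} (hx : x ∈ CartanMatrix.Relations.toSet ℂ A) : proj A x = 0 :=
  proj_eq_zero.2 (LieSubmodule.subset_lieSpan hx)

theorem proj_ad_pow (x y) (k : ℕ) : proj A ((ad ℂ _ x ^ k) y) =
    (ad ℂ _ (proj A x) ^ k) (proj A y) := by
  induction k with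
  | zero => simp
  | succ k ih => simp [pow_succ', ih]

open CartanMatrix in
/-- The defining generators of the Lie algebra presented by `A`. -/
noncomputable def std (A : Matrix (Fin n) (Fin n) ℤ) : Chev A (A.ToLieAlgebra ℂ) where
  h i := gen A (.H i)
  e i := gen A (.E i)
  f i := gen A (.F i)
  hh i j := by
    have := proj_rel (A := A) (x := Relations.HH ℂ (i, j)) (by simp [Relations.toSet])
    simpa [Relations.HH, proj_of] using this
  ef i := by
    have := proj_rel (A := A) (x := Relations.EF ℂ (i, i)) (by simp [Relations.toSet])
    simpa [Relations.EF, proj_of, sub_eq_zero] using this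
  ef_ne i j hij := by
    have := proj_rel (A := A) (x := Relations.EF ℂ (i, j)) (by simp [Relations.toSet])
    simpa [Relations.EF, proj_of, sub_eq_zero, hij] using this
  he i j := by
    have := proj_rel (A := A) (x := Relations.HE ℂ A (i, j)) (by simp [Relations.toSet])
    simpa [Relations.HE, proj_of, sub_eq_zero, Int.cast_smul_eq_zsmul] using this
  hf i j := by
    have := proj_rel (A := A) (x := Relations.HF ℂ A (i, j)) (by simp [Relations.toSet])
    simpa [Relations.HF, proj_of, add_eq_zero_iff_eq_neg, Int.cast_smul_eq_zsmul] using this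

open CartanMatrix in
theorem std_serre_e (A : Matrix (Fin n) (Fin n) ℤ) (i j : Fin n) :
    (ad ℂ _ ((std A).e i) ^ (-A i j).toNat) ⁅(std A).e i, (std A).e j⁆ = 0 := by
  have := proj_rel (A := A) (x := Relations.adE ℂ A (i, j)) (by simp [Relations.toSet])
  simpa [Relations.adE, proj_of, proj_ad_pow, std] using this

open CartanMatrix in
theorem std_serre_f (A : Matrix (Fin n) (Fin n) ℤ) (i j : Fin n) :
    (ad ℂ _ ((std A).f i) ^ (-A i j).toNat) ⁅(std A).f i, (std A).f j⁆ = 0 := by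
  have := proj_rel (A := A) (x := Relations.adF ℂ A (i, j)) (by simp [Relations.toSet])
  simpa [Relations.adF, proj_of, proj_ad_pow, std] using this

theorem hom_ext {φ ψ : A.ToLieAlgebra ℂ →ₗ⁅ℂ⁆ L} (he : ∀ i, φ ((std A).e i) = ψ ((std A).e i))
    (hf : ∀ i, φ ((std A).f i) = ψ ((std A).f i)) : φ = ψ := by
  have h : φ.comp (proj A) = ψ.comp (proj A) := by
    apply FreeLieAlgebra.hom_ext
    rintro (i | i | i)
    · change φ ((std A).h i) = ψ ((std A).h i)
      rw [← (std A).ef, LieHom.map_lie, LieHom.map_lie, he, hf]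
    · exact he i
    · exact hf i
  ext x
  obtain ⟨y, rfl⟩ := proj_surj A x
  exact congrArg (fun T => T y) h

open CartanMatrix in
/-- The universal property of the Serre presentation. -/
theorem exists_lift [FiniteDimensional ℂ L] (C : Chev A L) (hA : ∀ i, A i i = 2)
    (hA' : ∀ i j, i ≠ j → A i j ≤ 0) : ∃ φ : A.ToLieAlgebra ℂ →ₗ⁅ℂ⁆ L,
      (∀ i, φ ((std A).e i) = C.e i) ∧ ∀ i, φ ((std A).f i) = C.f i := by
  let Φ : FreeLieAlgebra ℂ (Generators (Fin n)) →ₗ⁅ℂ⁆ L := FreeLieAlgebra.lift ℂ fun g =>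
    match g with
    | .H i => C.h i
    | .E i => C.e i
    | .F i => C.f i
  have hΦH : ∀ i, Φ (FreeLieAlgebra.of ℂ (.H i)) = C.h i := fun i => by
    simp [Φ, FreeLieAlgebra.lift_of_apply]
  have hΦE : ∀ i, Φ (FreeLieAlgebra.of ℂ (.E i)) = C.e i := fun i => by
    simp [Φ, FreeLieAlgebra.lift_of_apply]
  have hΦF : ∀ i, Φ (FreeLieAlgebra.of ℂ (.F i)) = C.f i := fun i => by
    simp [Φ, FreeLieAlgebra.lift_of_apply]
  have hpow : ∀ (x y) (k : ℕ), Φ ((ad ℂ _ x ^ k) y) = (ad ℂ _ (Φ x) ^ k) (Φ y) := by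
    intro x y k
    induction k with
    | zero => simp
    | succ k ih => simp [pow_succ', ih]
  have hker : Relations.toIdeal ℂ A ≤ Φ.ker := by
    rw [Relations.toIdeal, LieSubmodule.lieSpan_le]
    rintro x (((((⟨⟨i, j⟩, rfl⟩ | ⟨⟨i, j⟩, rfl⟩) | ⟨⟨i, j⟩, rfl⟩) | ⟨⟨i, j⟩, rfl⟩) |
      ⟨⟨i, j⟩, rfl⟩) | ⟨⟨i, j⟩, rfl⟩) <;>
      rw [SetLike.mem_coe, LieHom.mem_ker]
    · simp [Relations.HH, hΦH, C.hh]
    · by_cases hij : i = j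
      · subst hij; simp [Relations.EF, hΦH, hΦE, hΦF, C.ef]
      · simp [Relations.EF, hΦE, hΦF, hij, C.ef_ne]
    · simp [Relations.HE, hΦE, hΦH, C.he, Int.cast_smul_eq_zsmul]
    · simp [Relations.HF, hΦF, hΦH, C.hf, Int.cast_smul_eq_zsmul]
    · simp [Relations.adE, hpow, hΦE, C.serre_e hA hA']
    · simp [Relations.adF, hpow, hΦF, C.serre_f hA hA']
  let φ₀ : A.ToLieAlgebra ℂ →ₗ[ℂ] L :=
    (Relations.toIdeal ℂ A).toSubmodule.liftQ Φ.toLinearMap (fun x hx => hker hx)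
  have hφ₀ : ∀ x, φ₀ (proj A x) = Φ x := fun x => rfl
  refine ⟨⟨φ₀, ?_⟩, fun i => (hφ₀ _).trans (hΦE i), fun i => (hφ₀ _).trans (hΦF i)⟩
  intro x y
  obtain ⟨x, rfl⟩ := proj_surj A x
  obtain ⟨y, rfl⟩ := proj_surj A y
  change φ₀ ⁅_, _⁆ = ⁅φ₀ _, φ₀ _⁆
  rw [← LieHom.map_lie, hφ₀, hφ₀, hφ₀, LieHom.map_lie]

/-- A subspace containing all `e i`, `f i` and stable under bracketing with them is everything. -/
theorem eq_top_of_stable (P : Submodule ℂ (A.ToLieAlgebra ℂ)) (he : ∀ i, (std A).e i ∈ P)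
    (hf : ∀ i, (std A).f i ∈ P) (hPe : ∀ i, ∀ x ∈ P, ⁅(std A).e i, x⁆ ∈ P)
    (hPf : ∀ i, ∀ x ∈ P, ⁅(std A).f i, x⁆ ∈ P) : P = ⊤ := by
  -- the normaliser of `P`, intersected with `P`, is a subalgebra containing the generators
  let K : LieSubalgebra ℂ (A.ToLieAlgebra ℂ) :=
    { carrier := {x | x ∈ P ∧ ∀ y ∈ P, ⁅x, y⁆ ∈ P}
      add_mem' := fun {a b} ha hb => ⟨P.add_mem ha.1 hb.1, fun y hy => by
        rw [add_lie]; exact P.add_mem (ha.2 y hy) (hb.2 y hy)⟩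
      zero_mem' := ⟨P.zero_mem, fun y _ => by simp⟩
      smul_mem' := fun c x hx => ⟨P.smul_mem c hx.1, fun y hy => by
        rw [smul_lie]; exact P.smul_mem c (hx.2 y hy)⟩
      lie_mem' := fun {a b} ha hb => ⟨ha.2 b hb.1, fun y hy => by
        rw [lie_lie]
        exact P.sub_mem (ha.2 _ (hb.2 y hy)) (hb.2 _ (ha.2 y hy))⟩ }
  have hKe : ∀ i, (std A).e i ∈ K := fun i => ⟨he i, hPe i⟩
  have hKf : ∀ i, (std A).f i ∈ K := fun i => ⟨hf i, hPf i⟩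
  let Φ : FreeLieAlgebra ℂ (CartanMatrix.Generators (Fin n)) →ₗ⁅ℂ⁆ K :=
    FreeLieAlgebra.lift ℂ fun g =>
      match g with
      | .H i => ⟨(std A).h i, by rw [← (std A).ef]; exact K.lie_mem (hKe i) (hKf i)⟩
      | .E i => ⟨(std A).e i, hKe i⟩
      | .F i => ⟨(std A).f i, hKf i⟩
  have h : K.incl.comp Φ = proj A := by
    apply FreeLieAlgebra.hom_ext
    rintro (i | i | i) <;> simp [Φ, FreeLieAlgebra.lift_of_apply] <;> rfl
  rw [eq_top_iff]
  intro x _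
  obtain ⟨y, rfl⟩ := proj_surj A x
  rw [← h]
  exact (Φ y).2.1

theorem ad_pow_lie {x y z : L} {a b : ℕ} (ha : (ad ℂ L x ^ a) y = 0) (hb : (ad ℂ L x ^ b) z = 0) :
    (ad ℂ L x ^ (a + b)) ⁅y, z⁆ = 0 := by
  have key : ∀ (m a b : ℕ) (y z : L), a + b ≤ m → (ad ℂ L x ^ a) y = 0 → (ad ℂ L x ^ b) z = 0 →
      (ad ℂ L x ^ m) ⁅y, z⁆ = 0 := by
    intro m
    induction m with
    | zero =>
      intro a b y z h ha hb
      obtain rfl : a = 0 := by omega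
      have : y = 0 := by simpa using ha
      simp [this]
    | succ m ih =>
      intro a b y z h ha hb
      rw [pow_succ, Module.End.mul_apply, ad_apply, leibniz_lie, map_add]
      rcases Nat.eq_zero_or_pos a with rfl | ha'
      · have : y = 0 := by simpa using ha
        simp [this]
      rcases Nat.eq_zero_or_pos b with rfl | hb'
      · have : z = 0 := by simpa using hb
        simp [this]
      rw [ih (a - 1) b _ z (by omega) (by
          rw [← ad_apply ℂ, ← Module.End.mul_apply, ← pow_succ, Nat.sub_add_cancel ha', ha]) hb,
        ih a (b - 1) y _ (by omega) ha (by
          rw [← ad_apply ℂ, ← Module.End.mul_apply, ← pow_succ, Nat.sub_add_cancel hb', hb]),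
        add_zero]
  exact key _ a b y z le_rfl ha hb

theorem locNil_of_gens (x : A.ToLieAlgebra ℂ) (he : ∀ i, ∃ k, (ad ℂ _ x ^ k) ((std A).e i) = 0)
    (hf : ∀ i, ∃ k, (ad ℂ _ x ^ k) ((std A).f i) = 0) (y : A.ToLieAlgebra ℂ) :
    ∃ k, (ad ℂ _ x ^ k) y = 0 := by
  let P : Submodule ℂ (A.ToLieAlgebra ℂ) :=
    { carrier := {y | ∃ k, (ad ℂ _ x ^ k) y = 0}
      add_mem' := by
        rintro a b ⟨k, hk⟩ ⟨l, hl⟩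
        refine ⟨k + l, ?_⟩
        rw [map_add]
        conv_lhs => enter [1]; rw [add_comm k l, pow_add, Module.End.mul_apply, hk, map_zero]
        rw [pow_add, Module.End.mul_apply, hl, map_zero, add_zero]
      zero_mem' := ⟨0, by simp⟩
      smul_mem' := by
        rintro c y ⟨k, hk⟩
        exact ⟨k, by rw [map_smul, hk, smul_zero]⟩ }
  have hP : P = ⊤ := by
    refine eq_top_of_stable P he hf ?_ ?_
    · rintro i y ⟨k, hk⟩
      obtain ⟨l, hl⟩ := he i
      exact ⟨_, ad_pow_lie hl hk⟩
    · rintro i y ⟨k, hk⟩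
      obtain ⟨l, hl⟩ := hf i
      exact ⟨_, ad_pow_lie hl hk⟩
  have : y ∈ P := by rw [hP]; trivial
  exact this

theorem std_locNil (A : Matrix (Fin n) (Fin n) ℤ) : (std A).LocNil := by
  intro i x
  constructor
  · refine locNil_of_gens _ (fun j => ⟨(-A i j).toNat + 1, ?_⟩) (fun j => ⟨3, ?_⟩) x
    · rw [pow_succ, Module.End.mul_apply, ad_apply, std_serre_e]
    · by_cases hij : i = j
      · subst hij
        have h1 : ⁅(std A).e i, (std A).h i⁆ = -((A i i : ℂ) • (std A).e i) := by
          rw [← lie_skew, (std A).he]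
        simp [pow_succ, (std A).ef, h1]
      · simp [pow_succ, (std A).ef_ne i j hij]
  · refine locNil_of_gens _ (fun j => ⟨3, ?_⟩) (fun j => ⟨(-A i j).toNat + 1, ?_⟩) x
    · by_cases hij : i = j
      · subst hij
        have h1 : ⁅(std A).f i, (std A).h i⁆ = (A i i : ℂ) • (std A).f i := by
          rw [← lie_skew, (std A).hf, neg_neg]
        have h2 : ⁅(std A).f i, (std A).e i⁆ = -(std A).h i := by
          rw [← lie_skew, (std A).ef]
        simp [pow_succ, h2, h1]
      · have h2 : ⁅(std A).f i, (std A).e j⁆ = 0 := by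
          rw [← lie_skew, (std A).ef_ne j i (Ne.symm hij), neg_zero]
        simp [pow_succ, h2]
    · rw [pow_succ, Module.End.mul_apply, ad_apply, std_serre_f]

end Chevalley

end E7E8

/-! ### Triangular decomposition of the Serre presentation -/

namespace E7E8

open LieAlgebra

section Triangular

variable {n : ℕ} {A : Matrix (Fin n) (Fin n) ℤ} {L : Type*} [LieRing L] [LieAlgebra ℂ L]

/-- `Mon e c x`: the element `x` is an iterated bracket `[e i₁, [e i₂, …, e iₖ]]` in which
`e i` occurs `c i` times. -/
inductive Mon (e : Fin n → L) : (Fin n → ℤ) → L → Prop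
  | base (i : Fin n) : Mon e (Pi.single i 1) (e i)
  | step (i : Fin n) {c : Fin n → ℤ} {x : L} (h : Mon e c x) : Mon e (c + Pi.single i 1) ⁅e i, x⁆

namespace Mon

variable {e : Fin n → L} {c : Fin n → ℤ} {x : L}

theorem single_nonneg (i : Fin n) : (0 : Fin n → ℤ) ≤ Pi.single i 1 := by
  simp

theorem nonneg (h : Mon e c x) : 0 ≤ c := by
  induction h with
  | base i => exact single_nonneg i
  | step i _ ih => exact add_nonneg ih (single_nonneg i)

theorem ne_zero (h : Mon e c x) : c ≠ 0 := by
  induction h with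
  | base i => simp
  | @step i c x h ih =>
    intro h0
    have h1 := congrFun h0 i
    have h2 := h.nonneg i
    simp only [Pi.add_apply, Pi.single_eq_same, Pi.zero_apply] at h1 h2
    omega

theorem of_support (h : Mon e c x) (i : Fin n) (hc : ∀ j, j ≠ i → c j = 0) :
    (x = e i ∧ c = Pi.single i 1) ∨ x = 0 := by
  induction h with
  | base k =>
    by_cases hk : k = i
    · subst hk; exact Or.inl ⟨rfl, rfl⟩
    · have := hc k hk
      simp at this
  | @step k c x h ih =>
    right
    have hki : k = i := by
      by_contra hk
      have h1 := hc k hk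
      have h2 := h.nonneg k
      simp only [Pi.add_apply, Pi.single_eq_same, Pi.zero_apply] at h1 h2
      omega
    subst hki
    rcases ih (fun j hj => by simpa [hj] using hc j hj) with ⟨rfl, -⟩ | rfl <;> simp

theorem mem_W (C : Chev A L) (h : Mon C.e c x) : x ∈ C.W (Chev.wt A c) := by
  induction h with
  | base i => rw [Chev.wt_single]; exact C.e_mem_W i
  | step i _ ih =>
    rw [Chev.wt_add, add_comm, Chev.wt_single]
    exact C.lie_mem_W (C.e_mem_W i) ih

end Mon

namespace Chev

/-- The span of all iterated brackets of the `e i`. -/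
def N (C : Chev A L) : Submodule ℂ L := Submodule.span ℂ {x | ∃ c, Mon C.e c x}

theorem mon_mem_N (C : Chev A L) {c : Fin n → ℤ} {x : L} (h : Mon C.e c x) : x ∈ C.N :=
  Submodule.subset_span ⟨c, h⟩

theorem lie_e_N (C : Chev A L) (i : Fin n) {x : L} (hx : x ∈ C.N) : ⁅C.e i, x⁆ ∈ C.N := by
  induction hx using Submodule.span_induction with
  | mem x hx => obtain ⟨c, hc⟩ := hx; exact C.mon_mem_N (hc.step i)
  | zero => simp
  | add x y _ _ hx hy => rw [lie_add]; exact add_mem hx hy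
  | smul a x _ hx => rw [lie_smul]; exact Submodule.smul_mem _ a hx

theorem lie_e_h (C : Chev A L) (i : Fin n) {x : L} (hx : x ∈ Submodule.span ℂ (Set.range C.h)) :
    ⁅C.e i, x⁆ ∈ C.N := by
  induction hx using Submodule.span_induction with
  | mem x hx =>
    obtain ⟨j, rfl⟩ := hx
    rw [← lie_skew, C.he]
    exact neg_mem (Submodule.smul_mem _ _ (C.mon_mem_N (.base i)))
  | zero => simp
  | add x y _ _ hx hy => rw [lie_add]; exact add_mem hx hy
  | smul a x _ hx => rw [lie_smul]; exact Submodule.smul_mem _ a hx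

theorem lie_f_N (C : Chev A L) (j : Fin n) {x : L} (hx : x ∈ C.N) :
    ⁅C.f j, x⁆ ∈ C.N ⊔ Submodule.span ℂ (Set.range C.h) := by
  induction hx using Submodule.span_induction with
  | mem x hx =>
    obtain ⟨c, hc⟩ := hx
    induction hc with
    | base i =>
      by_cases hij : i = j
      · subst hij
        rw [← lie_skew, C.ef]
        exact neg_mem (Submodule.mem_sup_right (Submodule.subset_span ⟨i, rfl⟩))
      · rw [← lie_skew, C.ef_ne i j hij, neg_zero]; exact zero_mem _
    | @step i c x h ih =>
      rw [leibniz_lie]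
      refine add_mem (Submodule.mem_sup_left ?_) (Submodule.mem_sup_left ?_)
      · by_cases hij : i = j
        · subst hij
          rw [← lie_skew (C.f i), C.ef, neg_lie, C.mem_W.1 (h.mem_W C) i]
          exact neg_mem (Submodule.smul_mem _ _ (C.mon_mem_N h))
        · rw [← lie_skew (C.f j), C.ef_ne i j hij, neg_zero, zero_lie]; exact zero_mem _
      · obtain ⟨y, hy, z, hz, hyz⟩ := Submodule.mem_sup.1 ih
        rw [← hyz, lie_add]
        exact add_mem (C.lie_e_N i hy) (C.lie_e_h i hz)
  | zero => simp
  | add x y _ _ hx hy => rw [lie_add]; exact add_mem hx hy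
  | smul a x _ hx => rw [lie_smul]; exact Submodule.smul_mem _ a hx

theorem swap_span_h (C : Chev A L) :
    Submodule.span ℂ (Set.range C.swap.h) = Submodule.span ℂ (Set.range C.h) := by
  have : Set.range C.swap.h = -Set.range C.h := by
    ext x
    simp only [Set.mem_range, swap, Set.mem_neg]
    exact exists_congr fun i => neg_eq_iff_eq_neg
  rw [this, Submodule.span_neg]

/-- A spanning set of weight vectors of the Serre presentation. -/
def gens (C : Chev A L) : Set L :=
  {x | ∃ c, Mon C.e c x} ∪ Set.range C.h ∪ {x | ∃ c, Mon C.f c x}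

theorem span_gens (C : Chev A L) : Submodule.span ℂ C.gens =
    C.N ⊔ Submodule.span ℂ (Set.range C.h) ⊔ C.swap.N := by
  rw [gens, Submodule.span_union, Submodule.span_union]; rfl

theorem lie_e_gens (C : Chev A L) (i : Fin n) {x : L} (hx : x ∈ Submodule.span ℂ C.gens) :
    ⁅C.e i, x⁆ ∈ Submodule.span ℂ C.gens := by
  rw [span_gens] at *
  obtain ⟨y, hy, z, hz, rfl⟩ := Submodule.mem_sup.1 hx
  obtain ⟨y, hy', w, hw, rfl⟩ := Submodule.mem_sup.1 hy
  rw [lie_add, lie_add]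
  have h3 := C.swap.lie_f_N i hz
  rw [swap_span_h] at h3
  refine add_mem (add_mem ?_ ?_) ?_
  · exact Submodule.mem_sup_left (Submodule.mem_sup_left (C.lie_e_N i hy'))
  · exact Submodule.mem_sup_left (Submodule.mem_sup_left (C.lie_e_h i hw))
  · refine (?_ : C.swap.N ⊔ Submodule.span ℂ (Set.range C.h) ≤ _) h3
    exact sup_le le_sup_right (le_sup_right.trans le_sup_left)

theorem swap_span_gens (C : Chev A L) :
    Submodule.span ℂ C.swap.gens = Submodule.span ℂ C.gens := by
  rw [span_gens, span_gens, swap_span_h]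
  change C.swap.N ⊔ _ ⊔ C.N = _
  rw [sup_comm, ← sup_assoc, sup_right_comm]

theorem lie_f_gens (C : Chev A L) (i : Fin n) {x : L} (hx : x ∈ Submodule.span ℂ C.gens) :
    ⁅C.f i, x⁆ ∈ Submodule.span ℂ C.gens := by
  rw [← swap_span_gens] at *
  exact C.swap.lie_e_gens i hx

/-- If weight vectors span everything, each weight space is spanned by those it contains. -/
theorem W_le_span (C : Chev A L) {X : Set L} (hX : Submodule.span ℂ X = ⊤)
    (hXW : ∀ x ∈ X, ∃ χ, x ∈ C.W χ) (ψ : Fin n → ℂ) : C.W ψ ≤ Submodule.span ℂ (X ∩ C.W ψ) := by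
  intro y hy
  have h1 : y ∈ Submodule.span ℂ (X ∩ C.W ψ) ⊔ Submodule.span ℂ (X \ C.W ψ) := by
    rw [← Submodule.span_union, Set.inter_union_sdiff, hX]; trivial
  obtain ⟨a, ha, b, hb, rfl⟩ := Submodule.mem_sup.1 h1
  have ha' : a ∈ C.W ψ := (Submodule.span_le.2 Set.inter_subset_right) ha
  have hb' : b ∈ C.W ψ := by simpa using sub_mem hy ha'
  have hb'' : b ∈ ⨆ χ, ⨆ (_ : χ ≠ ψ), C.W χ := by
    refine (Submodule.span_le.2 ?_ : Submodule.span ℂ (X \ C.W ψ) ≤ _) hb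
    rintro x ⟨hx, hxψ⟩
    obtain ⟨χ, hχ⟩ := hXW x hx
    refine Submodule.mem_iSup_of_mem χ (Submodule.mem_iSup_of_mem ?_ hχ)
    rintro rfl
    exact hxψ hχ
  have hb0 : b = 0 := (Submodule.disjoint_def.1 (C.W_indep ψ)) b hb' hb''
  rw [hb0, add_zero]
  exact ha

end Chev

open Chev

theorem std_span (A : Matrix (Fin n) (Fin n) ℤ) : Submodule.span ℂ (std A).gens = ⊤ := by
  refine eq_top_of_stable _ ?_ ?_ (fun i x hx => lie_e_gens _ i hx) (fun i x hx => lie_f_gens _ i hx)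
  · exact fun i => Submodule.subset_span (Or.inl (Or.inl ⟨_, .base i⟩))
  · exact fun i => Submodule.subset_span (Or.inr ⟨_, .base i⟩)

theorem Chev.gens_cases (C : Chev A L) {x : L} (hx : x ∈ C.gens) :
    (∃ c, Mon C.e c x ∧ x ∈ C.W (wt A c)) ∨ (x ∈ Set.range C.h ∧ x ∈ C.W (wt A 0)) ∨
      ∃ c, Mon C.f c x ∧ x ∈ C.W (wt A (-c)) := by
  rcases hx with (⟨c, hc⟩ | ⟨i, rfl⟩) | ⟨c, hc⟩
  · exact Or.inl ⟨c, hc, hc.mem_W C⟩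
  · exact Or.inr (Or.inl ⟨⟨i, rfl⟩, by rw [wt_zero]; exact C.h_mem_W i⟩)
  · refine Or.inr (Or.inr ⟨c, hc, ?_⟩)
    have := Mon.mem_W C.swap hc
    rwa [swap_W, ← wt_neg] at this

theorem Chev.gens_wt (C : Chev A L) {x : L} (hx : x ∈ C.gens) : ∃ c, x ∈ C.W (wt A c) := by
  rcases C.gens_cases hx with ⟨c, -, h⟩ | ⟨-, h⟩ | ⟨c, -, h⟩ <;> exact ⟨_, h⟩

theorem std_W_le (A : Matrix (Fin n) (Fin n) ℤ) (ψ : Fin n → ℂ) :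
    (std A).W ψ ≤ Submodule.span ℂ ((std A).gens ∩ (std A).W ψ) := by
  refine (std A).W_le_span (std_span A) ?_ ψ
  intro x hx
  obtain ⟨c, hc⟩ := (std A).gens_wt hx
  exact ⟨_, hc⟩

theorem std_exists_gen {ψ : Fin n → ℂ} (h : (std A).W ψ ≠ ⊥) :
    ∃ x ∈ (std A).gens, x ∈ (std A).W ψ ∧ x ≠ 0 := by
  by_contra hx
  push Not at hx
  apply h
  rw [eq_bot_iff]
  refine (std_W_le A ψ).trans (Submodule.span_le.2 ?_)
  rintro x ⟨h1, h2⟩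
  exact hx x h1 h2

theorem std_wt_integral {ψ : Fin n → ℂ} (h : (std A).W ψ ≠ ⊥) : ∃ c, ψ = wt A c := by
  obtain ⟨x, hx, hxψ, hx0⟩ := std_exists_gen h
  obtain ⟨c, hc⟩ := (std A).gens_wt hx
  exact ⟨c, (std A).eq_of_mem_W hx0 hxψ hc⟩

theorem std_sign (hinj : Function.Injective (wt A)) {c : Fin n → ℤ}
    (h : (std A).W (wt A c) ≠ ⊥) : 0 ≤ c ∨ c ≤ 0 := by
  obtain ⟨x, hx, hxψ, hx0⟩ := std_exists_gen h
  rcases (std A).gens_cases hx with ⟨d, hd, h⟩ | ⟨-, h⟩ | ⟨d, hd, h⟩ <;>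
    obtain rfl := hinj ((std A).eq_of_mem_W hx0 hxψ h)
  · exact Or.inl hd.nonneg
  · exact Or.inl le_rfl
  · exact Or.inr (neg_nonpos.2 hd.nonneg)

theorem std_W_zero (hinj : Function.Injective (wt A)) :
    (std A).W 0 ≤ Submodule.span ℂ (Set.range (std A).h) := by
  refine (std_W_le A 0).trans (Submodule.span_le.2 ?_)
  rintro x ⟨hx, hxψ⟩
  by_cases hx0 : x = 0
  · rw [hx0]; exact zero_mem _
  rw [SetLike.mem_coe, ← wt_zero (A := A)] at hxψ
  rcases (std A).gens_cases hx with ⟨d, hd, h⟩ | ⟨h, -⟩ | ⟨d, hd, h⟩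
  · exact absurd (hinj ((std A).eq_of_mem_W hx0 hxψ h)).symm hd.ne_zero
  · exact Submodule.subset_span h
  · exact absurd (neg_eq_zero.1 (hinj ((std A).eq_of_mem_W hx0 hxψ h)).symm) hd.ne_zero

theorem std_W_support (hinj : Function.Injective (wt A)) {c : Fin n → ℤ} {i : Fin n}
    (hc : ∀ j, j ≠ i → c j = 0) (hi : 0 < c i) {x}
    (hx : x ∈ (std A).gens) (hxc : x ∈ (std A).W (wt A c)) (hx0 : x ≠ 0) :
    x = (std A).e i ∧ c = Pi.single i 1 := by
  rcases (std A).gens_cases hx with ⟨d, hd, h⟩ | ⟨-, h⟩ | ⟨d, hd, h⟩ <;>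
    obtain rfl := hinj ((std A).eq_of_mem_W hx0 hxc h)
  · exact (hd.of_support i hc).resolve_right hx0
  · simp at hi
  · have := hd.nonneg i
    simp only [Pi.neg_apply, Pi.zero_apply] at hi this
    omega

theorem std_mult (hinj : Function.Injective (wt A)) {c : Fin n → ℤ} {i : Fin n}
    (hc : ∀ j, j ≠ i → c j = 0) (hi : 0 < c i)
    (h : (std A).W (wt A c) ≠ ⊥) : c = Pi.single i 1 := by
  obtain ⟨x, hx, hxψ, hx0⟩ := std_exists_gen h
  exact (std_W_support hinj hc hi hx hxψ hx0).2

theorem std_W_simple (hinj : Function.Injective (wt A)) (i : Fin n) :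
    (std A).W (wt A (Pi.single i 1)) ≤ Submodule.span ℂ {(std A).e i} := by
  refine (std_W_le A _).trans (Submodule.span_le.2 ?_)
  rintro x ⟨hx, hxψ⟩
  by_cases hx0 : x = 0
  · rw [hx0]; exact zero_mem _
  · rw [(std_W_support hinj (i := i) (fun j hj => by simp [hj]) (by simp) hx hxψ hx0).1]
    exact Submodule.mem_span_singleton_self _

/-- Descent along simple reflections: a reflection-stable family of vectors each of which is
nonnegative or nonpositive contains, together with any nonzero vector, a simple root. -/
theorem weyl_pos (hA : ∀ i, A i i = 2) (hpos : ∀ c : Fin n → ℤ, c ≠ 0 → 0 < c ⬝ᵥ A.mulVec c)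
    {Q : (Fin n → ℤ) → Prop} (hQ : ∀ i c, Q c → Q (srefl A i c)) (hs : ∀ c, Q c → 0 ≤ c ∨ c ≤ 0)
    (hm : ∀ c i, Q c → (∀ j, j ≠ i → c j = 0) → 0 < c i → c = Pi.single i 1)
    {c : Fin n → ℤ} (hc : 0 ≤ c) (hc0 : c ≠ 0) (hQc : Q c) : ∃ i, Q (Pi.single i 1) := by
  obtain ⟨N, hN⟩ : ∃ N : ℕ, (∑ j, c j) ≤ N := ⟨(∑ j, c j).toNat, Int.self_le_toNat _⟩
  induction N generalizing c with
  | zero =>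
    exfalso
    apply hc0
    have h0 : ∑ j, c j = 0 := le_antisymm (by simpa using hN) (Finset.sum_nonneg fun j _ => hc j)
    rw [Finset.sum_eq_zero_iff_of_nonneg fun j _ => hc j] at h0
    funext j
    exact h0 j (Finset.mem_univ j)
  | succ N ih =>
    obtain ⟨i, -, hi⟩ : ∃ i ∈ Finset.univ, 0 < c i * A.mulVec c i := by
      apply Finset.exists_lt_of_sum_lt
      simpa [dotProduct] using hpos c hc0
    have hci : 0 < c i := lt_of_le_of_ne (hc i) (fun h => by rw [← h] at hi; simp at hi)
    have hAi : 0 < A.mulVec c i := pos_of_mul_pos_right hi hci.le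
    by_cases hsupp : ∀ j, j ≠ i → c j = 0
    · exact ⟨i, hm c i hQc hsupp hci ▸ hQc⟩
    push Not at hsupp
    obtain ⟨j, hji, hj⟩ := hsupp
    have hrj : srefl A i c j = c j := by simp [srefl, hji]
    have hcj : 0 < c j := lt_of_le_of_ne (hc j) (Ne.symm hj)
    have hr : 0 ≤ srefl A i c := by
      refine (hs _ (hQ i c hQc)).resolve_right fun h => ?_
      have := h j
      rw [hrj] at this
      exact absurd this (not_le.2 hcj)
    refine ih hr (fun h => hj ?_) (hQ i c hQc) ?_
    · rw [← hrj, h]; rfl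
    · have : ∑ k, srefl A i c k = ∑ k, c k - A.mulVec c i := by
        simp [srefl, Finset.sum_sub_distrib]
      rw [this]
      push_cast at hN
      omega

theorem wt_injective (hpos : ∀ c : Fin n → ℤ, c ≠ 0 → 0 < c ⬝ᵥ A.mulVec c) :
    Function.Injective (wt A) := by
  intro c d h
  by_contra hne
  have h1 := hpos (c - d) (sub_ne_zero.2 hne)
  have h2 : A.mulVec (c - d) = 0 := by
    funext i
    have := congrFun h i
    simp only [wt, Int.cast_inj] at this
    simp [Matrix.mulVec_sub, this]
  rw [h2] at h1
  simp at h1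

/-- A reflection-stable set `Q` of weights of the Serre presentation which contains a nonzero weight
contains a simple root. This reduces claims about all nonzero weights to the simple roots. -/
theorem std_weyl (hA : ∀ i, A i i = 2) (hpos : ∀ c : Fin n → ℤ, c ≠ 0 → 0 < c ⬝ᵥ A.mulVec c)
    {Q : (Fin n → ℤ) → Prop} (hQ : ∀ i c, Q c → Q (srefl A i c))
    (hQW : ∀ c, Q c → (std A).W (wt A c) ≠ ⊥) {c : Fin n → ℤ} (hc0 : c ≠ 0) (hQc : Q c) :
    ∃ i, Q (Pi.single i 1) := by
  have hinj := wt_injective hpos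
  rcases std_sign hinj (hQW c hQc) with hc | hc
  · exact weyl_pos hA hpos hQ (fun c h => std_sign hinj (hQW c h))
      (fun c i h hc hi => std_mult hinj hc hi (hQW c h)) hc hc0 hQc
  · obtain ⟨i, hi⟩ := weyl_pos (Q := fun c => Q (-c)) hA hpos
      (fun i c h => by rw [← refl_neg]; exact hQ i _ h)
      (fun c h => by
        rcases std_sign hinj (hQW _ h) with h | h
        · exact Or.inr (neg_nonneg.1 h)
        · exact Or.inl (neg_nonpos.1 h))
      (fun c i h hc hi => by
        -- reflecting `-c`, a negative multiple of a simple root, gives `c`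
        have h1 : srefl A i (-c) = c := by
          funext j
          have h2 : A.mulVec c i = 2 * c i := by
            rw [Matrix.mulVec, dotProduct, Finset.sum_eq_single i, hA]
            · intro j _ hj; rw [hc j hj, mul_zero]
            · simp
          by_cases hj : j = i
          · subst hj; simp [srefl, Matrix.mulVec_neg, h2]; ring
          · simp [srefl, hj, hc j hj]
        have h2 := hQ i _ h
        rw [h1] at h2
        exact std_mult hinj hc hi (hQW _ h2))
      (c := -c) (neg_nonneg.2 hc) (neg_ne_zero.2 hc0) (by rwa [neg_neg])
    refine ⟨i, ?_⟩
    have := hQ i _ hi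
    rwa [refl_neg, refl_single hA, neg_neg] at this

/-- Nonzero weights have multiplicity at most one: reflections preserve multiplicities, and simple
roots have multiplicity at most one. -/
theorem std_rank_le_one (hA : ∀ i, A i i = 2)
    (hpos : ∀ c : Fin n → ℤ, c ≠ 0 → 0 < c ⬝ᵥ A.mulVec c) {c : Fin n → ℤ} (hc : c ≠ 0) :
    Module.rank ℂ ((std A).W (wt A c)) ≤ 1 := by
  by_contra hcon
  obtain ⟨i, hi⟩ := std_weyl (A := A) hA hpos
    (Q := fun c => ¬ Module.rank ℂ ((std A).W (wt A c)) ≤ 1)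
    (fun i c h => by rwa [(std A).rank_W_refl hA (std_locNil A)])
    (fun c h h0 => h (by rw [h0]; simp)) hc hcon
  apply hi
  rw [rank_submodule_le_one_iff']
  exact ⟨_, std_W_simple (wt_injective hpos) i⟩

end Triangular

end E7E8

/-! ### Lists of the positive roots of E₇ and E₈ -/

namespace E7E8

open LieAlgebra Chev

section RootLists

/-- The coefficient vector whose entries are the last `n` decimal digits of `m`. -/
def digits (n : ℕ) (m : ℕ) : Fin n → ℤ := fun i => ((m / 10 ^ (n - 1 - (i : ℕ)) % 10 : ℕ) : ℤ)

theorem digits_nonneg (n m : ℕ) : 0 ≤ digits n m := fun _ => Int.natCast_nonneg _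

/-- The positive roots of `E₈`: the eight decimal digits of each number (with leading zeros) are
the coefficients with respect to the simple roots in the Bourbaki numbering. -/
def codes8 : List ℕ :=
  [1, 10, 100, 1000, 10000, 100000, 1000000, 10000000, 11, 110, 1100, 11000, 110000, 1010000,
   10100000, 111, 1110, 11100, 111000, 1011000, 1110000, 10110000, 1111, 11110, 111100, 1011100,
   1111000, 10111000, 11110000, 11111, 111110, 1011110, 1111100, 1121000, 10111100, 11111000,
   111111, 1011111, 1111110, 1121100, 10111110, 11111100, 11121000, 1111111, 1121110, 1122100,
   10111111, 11111110, 11121100, 11221000, 1121111, 1122110, 11111111, 11121110, 11122100,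
   11221100, 1122111, 1122210, 11121111, 11122110, 11221110, 11222100, 1122211, 11122111, 11122210,
   11221111, 11222110, 11232100, 1122221, 11122211, 11222111, 11222210, 11232110, 12232100,
   11122221, 11222211, 11232111, 11232210, 12232110, 11222221, 11232211, 11233210, 12232111,
   12232210, 11232221, 11233211, 12232211, 12233210, 11233221, 12232221, 12233211, 12243210,
   11233321, 12233221, 12243211, 12343210, 12233321, 12243221, 12343211, 22343210, 12243321,
   12343221, 22343211, 12244321, 12343321, 22343221, 12344321, 22343321, 12354321, 22344321,
   13354321, 22354321, 22454321, 23354321, 23454321, 23464321, 23465321, 23465421, 23465431,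
   23465432]

/-- The positive roots of `E₇`, in the same encoding: those of `E₈` not involving the last simple
root. -/
def codes7 : List ℕ := (codes8.filter fun m => m % 10 = 0).map fun m => m / 10

/-- The positive roots of `E₈`, as coefficient vectors with respect to the simple roots. -/
def roots8 : List (Fin 8 → ℤ) := codes8.map (digits 8)

/-- The positive roots of `E₇`, as coefficient vectors with respect to the simple roots. -/
def roots7 : List (Fin 7 → ℤ) := codes7.map (digits 7)

/-- The highest root of `E₇`. -/
def theta : Fin 7 → ℤ := ![2, 2, 3, 4, 3, 2, 1]

/-- The effect of the `i`-th simple reflection on the decimal encoding of roots. -/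
def codeRefl {n : ℕ} (A : Matrix (Fin n) (Fin n) ℤ) (i : Fin n) (m : ℕ) : ℕ :=
  ((m : ℤ) - A.mulVec (digits n m) i * 10 ^ (n - 1 - (i : ℕ))).toNat

/-- A simple reflection permutes the positive roots of `E₈` other than the simple root itself. -/
theorem codes8_refl : ∀ m ∈ codes8, ∀ i : Fin 8, m = 10 ^ (7 - (i : ℕ)) ∨
    codeRefl CartanMatrix.E₈ i m ∈ codes8 ∧
      digits 8 (codeRefl CartanMatrix.E₈ i m) = srefl CartanMatrix.E₈ i (digits 8 m) := by
  decide +kernel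

/-- A simple reflection permutes the positive roots of `E₇` other than the simple root itself. -/
theorem codes7_refl : ∀ m ∈ codes7, ∀ i : Fin 7, m = 10 ^ (6 - (i : ℕ)) ∨
    codeRefl CartanMatrix.E₇ i m ∈ codes7 ∧
      digits 7 (codeRefl CartanMatrix.E₇ i m) = srefl CartanMatrix.E₇ i (digits 7 m) := by
  decide +kernel

/-- Every positive root of `E₇` other than the highest one is raised by some simple reflection. -/
theorem codes7_up : ∀ m ∈ codes7, m = 2234321 ∨ ∃ i : Fin 7, m < codeRefl CartanMatrix.E₇ i m ∧
    codeRefl CartanMatrix.E₇ i m ∈ codes7 ∧ m ≠ 10 ^ (6 - (i : ℕ)) := by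
  decide +kernel

theorem codes7_lt : ∀ m ∈ codes7, m ≤ 2234321 := by decide +kernel

theorem codes7_nodup : codes7.Nodup := by decide +kernel

theorem codes7_digits : ∀ m ∈ codes7, (∑ i : Fin 7, digits 7 m i * 10 ^ (6 - (i : ℕ))) = m := by
  decide +kernel

theorem codes7_ne : ∀ m ∈ codes7, m ≠ 0 := by decide +kernel

theorem codes7_length : codes7.length = 63 := by decide +kernel

theorem codes8_length : codes8.length = 120 := by decide +kernel

theorem codes8_simple : ∀ i : Fin 8, 10 ^ (7 - (i : ℕ)) ∈ codes8 := by decide +kernel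

theorem codes7_simple : ∀ i : Fin 7, 10 ^ (6 - (i : ℕ)) ∈ codes7 := by decide +kernel

theorem digits8_simple : ∀ i : Fin 8, digits 8 (10 ^ (7 - (i : ℕ))) = Pi.single i 1 := by
  decide +kernel

theorem digits7_simple : ∀ i : Fin 7, digits 7 (10 ^ (6 - (i : ℕ))) = Pi.single i 1 := by
  decide +kernel

theorem digits7_theta : digits 7 2234321 = theta := by decide +kernel

end RootLists
end E7E8

/-! ### Combinatorics of the roots and finite-dimensionality of e₈ -/

namespace E7E8

open LieAlgebra Chev CartanMatrix

section RootLemmas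

theorem A8_diag : ∀ i, E₈ i i = 2 := E₈_diag

theorem A7_diag : ∀ i, E₇ i i = 2 := E₇_diag

theorem A8_symm (i j : Fin 8) : E₈ i j = E₈ j i := by
  fin_cases i <;> fin_cases j <;> rfl

theorem A7_symm (i j : Fin 7) : E₇ i j = E₇ j i := by
  fin_cases i <;> fin_cases j <;> rfl

/-- The Cartan matrix of `E₈` is positive definite, by an explicit sum of squares. -/
theorem A8_pos (c : Fin 8 → ℤ) (hc : c ≠ 0) : 0 < c ⬝ᵥ E₈.mulVec c := by
  have key : 60 * (c ⬝ᵥ E₈.mulVec c) = 30 * (2 * c 0 - c 2) ^ 2 + 10 * (3 * c 2 - 2 * c 3) ^ 2 +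
      30 * (2 * c 1 - c 3) ^ 2 + 30 * (2 * c 7 - c 6) ^ 2 + 10 * (3 * c 6 - 2 * c 5) ^ 2 +
      5 * (4 * c 5 - 3 * c 4) ^ 2 + 3 * (5 * c 4 - 4 * c 3) ^ 2 + 2 * (c 3) ^ 2 := by
    simp [dotProduct, Matrix.mulVec, Fin.sum_univ_eight, E₈]
    ring
  by_contra hcon
  apply hc
  have h1 := sq_nonneg (2 * c 0 - c 2)
  have h2 := sq_nonneg (3 * c 2 - 2 * c 3)
  have h3 := sq_nonneg (2 * c 1 - c 3)
  have h4 := sq_nonneg (2 * c 7 - c 6)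
  have h5 := sq_nonneg (3 * c 6 - 2 * c 5)
  have h6 := sq_nonneg (4 * c 5 - 3 * c 4)
  have h7 := sq_nonneg (5 * c 4 - 4 * c 3)
  have h8 := sq_nonneg (c 3)
  have e1 := pow_eq_zero_iff (two_ne_zero) |>.1 (show (2 * c 0 - c 2) ^ 2 = 0 by linarith)
  have e2 := pow_eq_zero_iff (two_ne_zero) |>.1 (show (3 * c 2 - 2 * c 3) ^ 2 = 0 by linarith)
  have e3 := pow_eq_zero_iff (two_ne_zero) |>.1 (show (2 * c 1 - c 3) ^ 2 = 0 by linarith)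
  have e4 := pow_eq_zero_iff (two_ne_zero) |>.1 (show (2 * c 7 - c 6) ^ 2 = 0 by linarith)
  have e5 := pow_eq_zero_iff (two_ne_zero) |>.1 (show (3 * c 6 - 2 * c 5) ^ 2 = 0 by linarith)
  have e6 := pow_eq_zero_iff (two_ne_zero) |>.1 (show (4 * c 5 - 3 * c 4) ^ 2 = 0 by linarith)
  have e7 := pow_eq_zero_iff (two_ne_zero) |>.1 (show (5 * c 4 - 4 * c 3) ^ 2 = 0 by linarith)
  have e8 := pow_eq_zero_iff (two_ne_zero) |>.1 (show (c 3) ^ 2 = 0 by linarith)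
  funext i
  fin_cases i <;> simp <;> omega

/-- `E₇` is the principal submatrix of `E₈` on the first seven indices. -/
theorem A8_castSucc (i j : Fin 7) : E₈ i.castSucc j.castSucc = E₇ i j := by
  fin_cases i <;> fin_cases j <;> rfl

theorem A7_pos (c : Fin 7 → ℤ) (hc : c ≠ 0) : 0 < c ⬝ᵥ E₇.mulVec c := by
  have h := A8_pos (Fin.snoc c 0) (fun h => hc (funext fun i => by
    have := congrFun h i.castSucc
    simpa using this))
  have e : (Fin.snoc c 0 : Fin 8 → ℤ) ⬝ᵥ E₈.mulVec (Fin.snoc c 0 : Fin 8 → ℤ) =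
      c ⬝ᵥ E₇.mulVec c := by
    simp only [dotProduct, Matrix.mulVec, Fin.sum_univ_castSucc (n := 7), Fin.snoc_castSucc,
      Fin.snoc_last, mul_zero, zero_mul, add_zero, A8_castSucc]
  rwa [e] at h

theorem wt8_inj : Function.Injective (wt E₈) := wt_injective A8_pos

theorem wt7_inj : Function.Injective (wt E₇) := wt_injective A7_pos

/-- Roots of `E₈` in simple root coordinates. -/
def IsRoot8 (c : Fin 8 → ℤ) : Prop := c ∈ roots8 ∨ -c ∈ roots8

/-- Roots of `E₇` in simple root coordinates. -/
def IsRoot7 (c : Fin 7 → ℤ) : Prop := c ∈ roots7 ∨ -c ∈ roots7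

theorem isRoot8_single (i : Fin 8) : IsRoot8 (Pi.single i 1) :=
  Or.inl (digits8_simple i ▸ List.mem_map_of_mem (codes8_simple i))

theorem isRoot7_single (i : Fin 7) : IsRoot7 (Pi.single i 1) :=
  Or.inl (digits7_simple i ▸ List.mem_map_of_mem (codes7_simple i))

theorem IsRoot7.neg {c : Fin 7 → ℤ} (h : IsRoot7 c) : IsRoot7 (-c) := by
  rcases h with h | h
  · exact Or.inr (by rwa [neg_neg])
  · exact Or.inl h

theorem IsRoot8.neg {c : Fin 8 → ℤ} (h : IsRoot8 c) : IsRoot8 (-c) := by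
  rcases h with h | h
  · exact Or.inr (by rwa [neg_neg])
  · exact Or.inl h

theorem IsRoot8.refl {c : Fin 8 → ℤ} (h : IsRoot8 c) (i : Fin 8) : IsRoot8 (srefl E₈ i c) := by
  have main : ∀ c ∈ roots8, IsRoot8 (srefl E₈ i c) := by
    intro c hc
    obtain ⟨m, hm, rfl⟩ := List.mem_map.1 hc
    rcases codes8_refl m hm i with rfl | ⟨h1, h2⟩
    · rw [digits8_simple, refl_single A8_diag]; exact (isRoot8_single i).neg
    · rw [← h2]; exact Or.inl (List.mem_map_of_mem h1)
  rcases h with h | h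
  · exact main c h
  · have := (main _ h).neg
    rwa [refl_neg, neg_neg] at this

theorem IsRoot7.refl {c : Fin 7 → ℤ} (h : IsRoot7 c) (i : Fin 7) : IsRoot7 (srefl E₇ i c) := by
  have main : ∀ c ∈ roots7, IsRoot7 (srefl E₇ i c) := by
    intro c hc
    obtain ⟨m, hm, rfl⟩ := List.mem_map.1 hc
    rcases codes7_refl m hm i with rfl | ⟨h1, h2⟩
    · rw [digits7_simple, refl_single A7_diag]; exact (isRoot7_single i).neg
    · rw [← h2]; exact Or.inl (List.mem_map_of_mem h1)
  rcases h with h | h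
  · exact main c h
  · have := (main _ h).neg
    rwa [refl_neg, neg_neg] at this

theorem roots7_ne_zero {c : Fin 7 → ℤ} (hc : c ∈ roots7) : c ≠ 0 := by
  obtain ⟨m, hm, rfl⟩ := List.mem_map.1 hc
  intro h
  have h1 := codes7_digits m hm
  rw [h] at h1
  exact codes7_ne m hm (by simpa using h1.symm)

theorem IsRoot7.ne_zero {c : Fin 7 → ℤ} (h : IsRoot7 c) : c ≠ 0 := by
  rcases h with h | h
  · exact roots7_ne_zero h
  · exact neg_ne_zero.1 (roots7_ne_zero h)

/-- The 126 roots of `E₇`. -/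
def rootList7 : List (Fin 7 → ℤ) := roots7 ++ roots7.map fun c => -c

theorem mem_rootList7 {c : Fin 7 → ℤ} : c ∈ rootList7 ↔ IsRoot7 c := by
  simp only [rootList7, List.mem_append, List.mem_map, IsRoot7]
  refine or_congr Iff.rfl ⟨?_, fun h => ⟨_, h, neg_neg c⟩⟩
  rintro ⟨d, hd, rfl⟩
  rwa [neg_neg]

theorem roots7_nodup : roots7.Nodup := by
  refine List.Nodup.map_on ?_ codes7_nodup
  intro a ha b hb h
  have h1 := codes7_digits a ha
  rw [h, codes7_digits b hb] at h1
  exact_mod_cast h1.symm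

theorem rootList7_nodup : rootList7.Nodup := by
  refine List.Nodup.append roots7_nodup (roots7_nodup.map neg_injective) ?_
  intro c hc hc'
  obtain ⟨d, hd, rfl⟩ := List.mem_map.1 hc'
  apply roots7_ne_zero hc
  obtain ⟨m, hm, h1⟩ := List.mem_map.1 hc
  obtain ⟨k, hk, rfl⟩ := List.mem_map.1 hd
  exact le_antisymm (neg_nonpos.2 (digits_nonneg 7 k)) (h1 ▸ digits_nonneg 7 m)

theorem rootList7_length : rootList7.length = 126 := by
  simp [rootList7, roots7, codes7_length]

/-- All roots of `E₇` are conjugate under simple reflections. -/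
theorem roots7_connected {R : (Fin 7 → ℤ) → Prop} (hR : ∀ i c, R c ↔ R (srefl E₇ i c))
    {c d : Fin 7 → ℤ} (hc : IsRoot7 c) (hd : IsRoot7 d) (h : R c) : R d := by
  have key : ∀ (R : (Fin 7 → ℤ) → Prop) (_ : ∀ i c, R c ↔ R (srefl E₇ i c)),
      ∀ c ∈ roots7, (R c ↔ R theta) := by
    intro R hR c hc
    obtain ⟨m, hm, rfl⟩ := List.mem_map.1 hc
    obtain ⟨N, hN⟩ : ∃ N, N = 2234321 - m := ⟨_, rfl⟩
    induction N using Nat.strong_induction_on generalizing m with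
    | _ N ih =>
      rcases codes7_up m hm with rfl | ⟨i, h1, h2, h3⟩
      · rw [digits7_theta]
      · have h4 := ((codes7_refl m hm i).resolve_left h3).2
        rw [hR i (digits 7 m), ← h4]
        have := codes7_lt _ h2
        exact ih _ (by omega) _ h2 (List.mem_map_of_mem h2) rfl
  have keyneg := key (fun c => R (-c)) (fun i c => by rw [← refl_neg]; exact hR i (-c))
  have hth : R theta ↔ R (-theta) := by
    have h0 : Pi.single 0 1 ∈ roots7 := digits7_simple 0 ▸ List.mem_map_of_mem (codes7_simple 0)
    rw [← key R hR _ h0, ← keyneg _ h0, hR 0, refl_single A7_diag]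
  have all : ∀ c, IsRoot7 c → (R c ↔ R theta) := by
    rintro c (hc | hc)
    · exact key R hR c hc
    · have := keyneg _ hc
      simp only [neg_neg] at this
      rw [this, hth]
  rw [all d hd, ← all c hc]
  exact h

end RootLemmas

section E8

/-- The nonzero weights of `e₈` are roots. -/
theorem W8_isRoot {c : Fin 8 → ℤ} (hc : c ≠ 0) (h : (std E₈).W (wt E₈ c) ≠ ⊥) : IsRoot8 c := by
  by_contra hcon
  obtain ⟨i, hi⟩ := std_weyl (A := E₈) A8_diag A8_pos
    (Q := fun c => (std E₈).W (wt E₈ c) ≠ ⊥ ∧ ¬ IsRoot8 c)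
    (fun i c h => by
      refine ⟨fun h0 => h.1 ?_, fun h1 => h.2 ?_⟩
      · rw [← Submodule.rank_eq_zero] at h0 ⊢
        rw [← h0, (std E₈).rank_W_refl A8_diag (std_locNil _)]
      · have := h1.refl i
        rwa [refl_refl A8_diag] at this)
    (fun c h => h.1) hc ⟨h, hcon⟩
  exact hi.2 (isRoot8_single i)

/-- `e₈` is spanned by `8 + 240` elements. -/
theorem e8_span : ∃ s : Finset (e₈ ℂ), s.card ≤ 248 ∧ Submodule.span ℂ (s : Set (e₈ ℂ)) = ⊤ := by
  classical
  have h1 : ∀ c : Fin 8 → ℤ, ∃ v : e₈ ℂ, c ≠ 0 → (std E₈).W (wt E₈ c) ≤ Submodule.span ℂ {v} := by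
    intro c
    by_cases hc : c = 0
    · exact ⟨0, fun h => absurd hc h⟩
    · obtain ⟨v, hv⟩ := (rank_submodule_le_one_iff' _).1 (std_rank_le_one A8_diag A8_pos hc)
      exact ⟨v, fun _ => hv⟩
  choose v hv using h1
  let R : Finset (Fin 8 → ℤ) := roots8.toFinset ∪ (roots8.map fun c => -c).toFinset
  have hR : R.card ≤ 240 := by
    refine (Finset.card_union_le _ _).trans ?_
    have h2 := List.toFinset_card_le roots8
    have h3 := List.toFinset_card_le (roots8.map fun c => -c)
    have h4 : roots8.length = 120 := by simp [roots8, codes8_length]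
    rw [List.length_map] at h3
    omega
  refine ⟨Finset.univ.image (std E₈).h ∪ R.image v, ?_, ?_⟩
  · refine (Finset.card_union_le _ _).trans ?_
    have h2 := Finset.card_image_le (s := (Finset.univ : Finset (Fin 8))) (f := (std E₈).h)
    have h3 := Finset.card_image_le (s := R) (f := v)
    simp only [Finset.card_univ, Fintype.card_fin] at h2
    omega
  · rw [eq_top_iff, ← std_span E₈, Submodule.span_le]
    intro x hx
    by_cases hx0 : x = 0
    · rw [hx0]; exact zero_mem _
    obtain ⟨c, hc⟩ := (std E₈).gens_wt hx
    by_cases hc0 : c = 0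
    · rw [hc0, wt_zero] at hc
      refine Submodule.span_mono ?_ (std_W_zero wt8_inj hc)
      rintro _ ⟨i, rfl⟩
      simp
    · have hroot := W8_isRoot hc0 (fun h => hx0 (by rw [h] at hc; simpa using hc))
      refine Submodule.span_mono ?_ (hv c hc0 hc)
      rw [Set.singleton_subset_iff, Finset.mem_coe]
      refine Finset.mem_union_right _ (Finset.mem_image_of_mem v ?_)
      rcases hroot with h | h
      · exact Finset.mem_union_left _ (List.mem_toFinset.2 h)
      · exact Finset.mem_union_right _ (List.mem_toFinset.2 (List.mem_map.2 ⟨_, h, neg_neg c⟩))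

instance e8_finite : FiniteDimensional ℂ (e₈ ℂ) := by
  obtain ⟨s, -, hs⟩ := e8_span
  exact ⟨⟨s, hs⟩⟩

theorem e8_finrank_le : Module.finrank ℂ (e₈ ℂ) ≤ 248 := by
  obtain ⟨s, h1, hs⟩ := e8_span
  rw [← finrank_top, ← hs]
  exact (finrank_span_finset_le_card s).trans h1

end E8

end E7E8

/-! ### Simplicity of e₈ and multiplicities of E₇-weights -/

namespace E7E8

open LieAlgebra Chev CartanMatrix

section Simplicity

/-- Distinct simultaneous eigenspaces contribute independently to the dimension. -/
theorem sum_finrank_W_le {n : ℕ} {A : Matrix (Fin n) (Fin n) ℤ} {L : Type*} [LieRing L]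
    [LieAlgebra ℂ L] [FiniteDimensional ℂ L] (C : Chev A L) (s : Finset (Fin n → ℂ)) :
    ∑ χ ∈ s, Module.finrank ℂ (C.W χ) ≤ Module.finrank ℂ L := by
  classical
  have hind : iSupIndep fun χ : s => C.W χ := C.W_indep.comp Subtype.val_injective
  have h1 : Module.finrank ℂ (DirectSum s fun χ => C.W χ) ≤ Module.finrank ℂ L :=
    LinearMap.finrank_le_finrank_of_injective
      (f := DirectSum.coeLinearMap fun χ : s => C.W χ) hind.dfinsupp_lsum_injective
  rw [Module.finrank_directSum] at h1
  rwa [← Finset.sum_coe_sort s fun χ => Module.finrank ℂ (C.W χ)]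

/-- A nonzero ideal contains a simultaneous eigenvector of the `h i`. -/
theorem exists_weight_vector {n : ℕ} {A : Matrix (Fin n) (Fin n) ℤ} {L : Type*} [LieRing L]
    [LieAlgebra ℂ L] [FiniteDimensional ℂ L] (C : Chev A L) (I : LieIdeal ℂ L) (hI : I ≠ ⊥) :
    ∃ χ, ∃ x ∈ I, x ≠ 0 ∧ x ∈ C.W χ := by
  classical
  suffices h : ∀ s : Finset (Fin n), ∃ χ : Fin n → ℂ, ∃ x ∈ I, x ≠ 0 ∧
      ∀ i ∈ s, ⁅C.h i, x⁆ = χ i • x by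
    obtain ⟨χ, x, h1, h2, h3⟩ := h Finset.univ
    exact ⟨χ, x, h1, h2, C.mem_W.2 fun i => h3 i (Finset.mem_univ i)⟩
  intro s
  induction s using Finset.induction_on with
  | empty =>
    obtain ⟨x, hx, hx0⟩ := (Submodule.ne_bot_iff I.toSubmodule).1
      (fun h => hI ((LieSubmodule.toSubmodule_eq_bot I).1 h))
    exact ⟨0, x, hx, hx0, by simp⟩
  | insert j s hj ih =>
    obtain ⟨χ, x, hxI, hx0, hx⟩ := ih
    let K : Submodule ℂ L := I.toSubmodule ⊓
      ⨅ i ∈ s, Module.End.eigenspace (ad ℂ L (C.h i)) (χ i)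
    have memK : ∀ y, y ∈ K ↔ y ∈ I ∧ ∀ i ∈ s, ⁅C.h i, y⁆ = χ i • y := by
      intro y
      simp [K, Submodule.mem_iInf]
    have hK : ∀ y ∈ K, (ad ℂ L (C.h j)) y ∈ K := by
      intro y hy
      rw [memK] at hy ⊢
      refine ⟨lie_mem_right ℂ L I _ _ hy.1, fun i hi => ?_⟩
      rw [ad_apply, leibniz_lie, C.hh, zero_lie, zero_add, hy.2 i hi, lie_smul]
    have : Nontrivial K := ⟨⟨x, (memK x).2 ⟨hxI, hx⟩⟩, 0, fun h => hx0 (congrArg Subtype.val h)⟩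
    obtain ⟨a, ha⟩ := Module.End.exists_eigenvalue ((ad ℂ L (C.h j)).restrict hK)
    obtain ⟨y, hy⟩ := ha.exists_hasEigenvector
    have h1 := (memK y).1 y.2
    refine ⟨Function.update χ j a, y, h1.1, fun h => hy.2 (Subtype.ext h), fun i hi => ?_⟩
    rcases Finset.mem_insert.1 hi with rfl | hi'
    · simpa using congrArg Subtype.val hy.apply_eq_smul
    · rw [Function.update_of_ne (by rintro rfl; exact hj hi')]
      exact h1.2 i hi'

/-- Connectedness of the Dynkin diagram of `E₈`. -/
theorem E8_connected {P : Fin 8 → Prop} (hP : ∀ i j, E₈ i j ≠ 0 → P i → P j) {i : Fin 8}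
    (hi : P i) (j : Fin 8) : P j := by
  have edge : ∀ i j, E₈ i j ≠ 0 → (P i ↔ P j) := fun i j h =>
    ⟨hP i j h, hP j i (by rwa [A8_symm])⟩
  have h02 := edge 0 2 (by decide)
  have h23 := edge 2 3 (by decide)
  have h13 := edge 1 3 (by decide)
  have h34 := edge 3 4 (by decide)
  have h45 := edge 4 5 (by decide)
  have h56 := edge 5 6 (by decide)
  have h67 := edge 6 7 (by decide)
  have all : ∀ k, P k ↔ P 3 := by
    intro k
    fin_cases k <;> simp <;> tauto
  exact (all j).2 ((all i).1 hi)

/-- Since the Dynkin diagram is connected, an ideal containing one `h i` contains all generators. -/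
theorem e8_ideal_of_h (I : LieIdeal ℂ (e₈ ℂ)) {i : Fin 8} (hi : (std E₈).h i ∈ I) : I = ⊤ := by
  have he : ∀ i j, (std E₈).h i ∈ I → E₈ i j ≠ 0 → (std E₈).e j ∈ I := by
    intro i j h hij
    have h1 : ⁅(std E₈).h i, (std E₈).e j⁆ ∈ I := lie_mem_left ℂ _ I _ _ h
    rw [(std E₈).he] at h1
    exact (I.toSubmodule.smul_mem_iff (Int.cast_ne_zero.2 hij)).1 h1
  have hf : ∀ i j, (std E₈).h i ∈ I → E₈ i j ≠ 0 → (std E₈).f j ∈ I := by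
    intro i j h hij
    have h1 : ⁅(std E₈).h i, (std E₈).f j⁆ ∈ I := lie_mem_left ℂ _ I _ _ h
    rw [(std E₈).hf, ← neg_smul] at h1
    exact (I.toSubmodule.smul_mem_iff (neg_ne_zero.2 (Int.cast_ne_zero.2 hij))).1 h1
  have hall : ∀ j, (std E₈).h j ∈ I := E8_connected (fun i j hij h => by
    rw [← (std E₈).ef]
    exact lie_mem_left ℂ _ I _ _ (he i j h hij)) hi
  have hd : ∀ i, E₈ i i ≠ 0 := fun i => by rw [A8_diag]; decide
  have := eq_top_of_stable I.toSubmodule (fun i => he i i (hall i) (hd i))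
    (fun i => hf i i (hall i) (hd i)) (fun i x hx => lie_mem_right ℂ _ I _ _ hx)
    (fun i x hx => lie_mem_right ℂ _ I _ _ hx)
  exact (LieSubmodule.toSubmodule_eq_top _).1 this

theorem e8_ideal_of_e (I : LieIdeal ℂ (e₈ ℂ)) {i : Fin 8} (hi : (std E₈).e i ∈ I) : I = ⊤ :=
  e8_ideal_of_h I (i := i) (by rw [← (std E₈).ef]; exact lie_mem_left ℂ _ I _ _ hi)

theorem e8_lie_h (a : Fin 8 → ℂ) (j : Fin 8) : ⁅∑ i, a i • (std E₈).h i, (std E₈).e j⁆ =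
    (∑ i, a i * (E₈ i j : ℂ)) • (std E₈).e j := by
  rw [sum_lie, Finset.sum_smul]
  refine Finset.sum_congr rfl fun i _ => ?_
  rw [smul_lie, (std E₈).he, smul_smul]

/-- The Cartan matrix is invertible, so some simple root is nonzero on a given nonzero vector. -/
theorem E8_nondeg {a : Fin 8 → ℂ} (h : ∀ j, ∑ i, a i * (E₈ i j : ℂ) = 0) : a = 0 := by
  have hdet : (E₈.map (Int.castRingHom ℂ)).det ≠ 0 := by
    have : (E₈.map (Int.castRingHom ℂ)).det = 1 := by
      have h2 := (Int.castRingHom ℂ).map_det E₈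
      rw [E₈_det] at h2
      simpa using h2.symm
    rw [this]; exact one_ne_zero
  exact Matrix.eq_zero_of_vecMul_eq_zero hdet (funext fun j => by
    simpa [Matrix.vecMul, dotProduct] using h j)

variable [hnt : Nontrivial (e₈ ℂ)]

theorem e8_h_ne (i : Fin 8) : (std E₈).h i ≠ 0 := fun h =>
  bot_ne_top (e8_ideal_of_h ⊥ (i := i) (by rw [h]; exact zero_mem _))

theorem e8_e_ne (i : Fin 8) : (std E₈).e i ≠ 0 := fun h =>
  e8_h_ne i (by rw [← (std E₈).ef, h, zero_lie])

theorem e8_h_indep : LinearIndependent ℂ (std E₈).h := by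
  rw [Fintype.linearIndependent_iff]
  intro a ha
  refine congrFun (E8_nondeg fun j => ?_)
  have h1 := e8_lie_h a j
  rw [ha, zero_lie] at h1
  exact (smul_eq_zero.1 h1.symm).resolve_right (e8_e_ne j)

instance e8_isSimple : IsSimple ℂ (e₈ ℂ) where
  non_abelian h := e8_h_ne 0 (by rw [← (std E₈).ef]; exact trivial_lie_zero _ _ _ _)
  eq_bot_or_eq_top I := by
    refine or_iff_not_imp_left.2 fun hI => ?_
    obtain ⟨χ, x, hxI, hx0, hx⟩ := exists_weight_vector (std E₈) I hI
    have hχ : (std E₈).W χ ≠ ⊥ := (Submodule.ne_bot_iff _).2 ⟨x, hx, hx0⟩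
    obtain ⟨c, rfl⟩ := std_wt_integral hχ
    by_cases hc : c = 0
    · rw [hc, wt_zero] at hx
      obtain ⟨a, rfl⟩ := (Submodule.mem_span_range_iff_exists_fun ℂ).1 (std_W_zero wt8_inj hx)
      obtain ⟨j, hj⟩ : ∃ j, ∑ i, a i * (E₈ i j : ℂ) ≠ 0 := by
        by_contra hcon
        push Not at hcon
        exact hx0 (by simp [E8_nondeg hcon])
      have h1 : ⁅∑ i, a i • (std E₈).h i, (std E₈).e j⁆ ∈ I := lie_mem_left ℂ _ I _ _ hxI
      rw [e8_lie_h] at h1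
      exact e8_ideal_of_e I ((I.toSubmodule.smul_mem_iff hj).1 h1)
    · obtain ⟨i, y, hyI, hy0, hy⟩ := std_weyl (A := E₈) A8_diag A8_pos
        (Q := fun c => ∃ x ∈ I, x ≠ 0 ∧ x ∈ (std E₈).W (wt E₈ c))
        (fun i c ⟨x, hxI, hx0, hx⟩ => by
          obtain ⟨T, h1, h2, h3⟩ := (std E₈).exists_refl_wt A8_diag (std_locNil _) i c
          exact ⟨T x, h3 I x hxI, fun h => hx0 (h2 x hx h), h1 x hx⟩)
        (fun c ⟨x, _, hx0, hx⟩ => (Submodule.ne_bot_iff _).2 ⟨x, hx, hx0⟩)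
        hc ⟨x, hxI, hx0, hx⟩
      obtain ⟨a, rfl⟩ := Submodule.mem_span_singleton.1 (std_W_simple wt8_inj i hy)
      have ha : a ≠ 0 := by rintro rfl; simp at hy0
      exact e8_ideal_of_e I ((I.toSubmodule.smul_mem_iff ha).1 hyI)

instance e8_isKilling : IsKilling ℂ (e₈ ℂ) := inferInstance

end Simplicity

section Dimension

/-- The weights `wt E₇ c`, for `c` a root of `E₇`. -/
noncomputable def rootWts7 : Finset (Fin 7 → ℂ) :=
  ⟨(rootList7.map (wt E₇) : List (Fin 7 → ℂ)), rootList7_nodup.map wt7_inj⟩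

theorem mem_rootWts7 {χ : Fin 7 → ℂ} : χ ∈ rootWts7 ↔ ∃ c, IsRoot7 c ∧ wt E₇ c = χ := by
  simp [rootWts7, ← Finset.mem_val, mem_rootList7]

theorem card_rootWts7 : rootWts7.card = 126 := by
  rw [Finset.card, rootWts7, Multiset.coe_card, List.length_map, rootList7_length]

theorem zero_notMem_rootWts7 : (0 : Fin 7 → ℂ) ∉ rootWts7 := by
  rw [mem_rootWts7]
  rintro ⟨c, hc, h⟩
  exact hc.ne_zero (wt7_inj (by rw [h, wt_zero]))

variable {L : Type*} [LieRing L] [LieAlgebra ℂ L] [FiniteDimensional ℂ L]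

theorem finrank_W7_eq (C : Chev E₇ L) {c d : Fin 7 → ℤ} (hc : IsRoot7 c) (hd : IsRoot7 d) :
    Module.finrank ℂ (C.W (wt E₇ d)) = Module.finrank ℂ (C.W (wt E₇ c)) :=
  roots7_connected (R := fun d => Module.finrank ℂ (C.W (wt E₇ d)) =
      Module.finrank ℂ (C.W (wt E₇ c)))
    (fun i d => by
      rw [Module.finrank, Module.finrank, Module.finrank,
        C.rank_W_refl A7_diag (C.locNil A7_diag)]) hc hd rfl

/-- All root weights of `E₇` occur with the same multiplicity `m`, so `126 m + dim W 0 ≤ dim L`. -/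
theorem finrank_W7_le (C : Chev E₇ L) {c : Fin 7 → ℤ} (hc : IsRoot7 c) :
    126 * Module.finrank ℂ (C.W (wt E₇ c)) + Module.finrank ℂ (C.W 0) ≤ Module.finrank ℂ L := by
  classical
  have h := sum_finrank_W_le C (insert 0 rootWts7)
  rw [Finset.sum_insert zero_notMem_rootWts7, Finset.sum_congr rfl (g := fun _ =>
    Module.finrank ℂ (C.W (wt E₇ c))), Finset.sum_const, card_rootWts7, smul_eq_mul] at h
  · omega
  · intro χ hχ
    obtain ⟨d, hd, rfl⟩ := mem_rootWts7.1 hχ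
    exact finrank_W7_eq C hc hd

theorem finrank_W7_pos (C : Chev E₇ L) {c : Fin 7 → ℤ} (hc : IsRoot7 c) {i : Fin 7}
    (hi : C.e i ≠ 0) : 0 < Module.finrank ℂ (C.W (wt E₇ c)) := by
  rw [finrank_W7_eq C (isRoot7_single i) hc, wt_single]
  exact Submodule.one_le_finrank_iff.2 ((Submodule.ne_bot_iff _).2 ⟨_, C.e_mem_W i, hi⟩)

/-- The Chevalley generators of `e₈` belonging to the subdiagram of type `E₇`. -/
noncomputable def sub7 : Chev E₇ (e₈ ℂ) where
  h i := (std E₈).h i.castSucc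
  e i := (std E₈).e i.castSucc
  f i := (std E₈).f i.castSucc
  hh _ _ := (std E₈).hh _ _
  ef _ := (std E₈).ef _
  ef_ne i j hij := (std E₈).ef_ne _ _ (fun h => hij (Fin.castSucc_injective _ h))
  he i j := by rw [(std E₈).he, A8_castSucc]
  hf i j := by rw [(std E₈).hf, A8_castSucc]

/-- The generators of the `E₇` subdiagram contribute `126` root weights, and the weight-zero space
contains the eight independent elements `h i`; here `134 = 126 + 8`. -/
theorem e8_finrank_ge [Nontrivial (e₈ ℂ)] : 134 ≤ Module.finrank ℂ (e₈ ℂ) := by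
  have h1 := finrank_W7_le sub7 (isRoot7_single 0)
  have h2 := finrank_W7_pos sub7 (isRoot7_single 0) (i := 0) (e8_e_ne _)
  have h3 : 8 ≤ Module.finrank ℂ (sub7.W 0) := by
    have h4 := finrank_span_eq_card e8_h_indep
    rw [Fintype.card_fin] at h4
    refine h4.ge.trans (Submodule.finrank_mono (Submodule.span_le.2 ?_))
    rintro _ ⟨i, rfl⟩
    exact sub7.mem_W.2 fun j => by
      rw [show ⁅sub7.h j, (std E₈).h i⁆ = 0 from (std E₈).hh _ _]; simp
  omega

/-- For a nonzero `E₇`-system in `e₈` the root weights have multiplicity one, as `2 * 126 > 248`. -/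
theorem finrank_W7_eq_one (C : Chev E₇ (e₈ ℂ)) {i : Fin 7} (hi : C.e i ≠ 0) {c : Fin 7 → ℤ}
    (hc : IsRoot7 c) : Module.finrank ℂ (C.W (wt E₇ c)) = 1 := by
  have h1 := finrank_W7_le C hc
  have h2 := finrank_W7_pos C hc hi
  have h3 := e8_finrank_le
  omega

end Dimension

end E7E8

/-! ### Extending an E₇ basis inside an irreducible root system -/

namespace E7E8

open Chev CartanMatrix Module

section RootSystem

variable {ι M N : Type*} [AddCommGroup M] [Module ℂ M] [AddCommGroup N] [Module ℂ N]
  (P : RootPairing ι ℂ M N) [P.IsCrystallographic]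

theorem root_refl (k l : ι) :
    P.root (P.reflectionPerm k l) = P.root l - P.pairingIn ℤ l k • P.root k := by
  rw [P.root_reflectionPerm, RootPairing.reflection_apply_root' ℤ]

theorem pairing_cast (k l : ι) : P.pairing k l = (P.pairingIn ℤ k l : ℂ) := by
  rw [← P.algebraMap_pairingIn ℤ]; simp

theorem pairingIn_refl (k l j : ι) : P.pairingIn ℤ (P.reflectionPerm k l) j =
    P.pairingIn ℤ l j - P.pairingIn ℤ l k * P.pairingIn ℤ k j := by
  have h : P.root (P.reflectionPerm k l) =
      (1 : ℤ) • P.root l + (-P.pairingIn ℤ l k) • P.root k := by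
    rw [root_refl, one_smul, neg_smul, sub_eq_add_neg]
  rw [RootPairing.pairingIn_eq_add_of_root_eq_smul_add_smul h, one_smul, neg_smul, smul_eq_mul,
    sub_eq_add_neg]

variable [Fintype ι]

/-- The integral squared length of a root. -/
noncomputable def len (k : ι) : ℤ := (P.posRootForm ℤ).rootLength k

theorem len_pos (k : ι) : 0 < len P k := (P.posRootForm ℤ).rootLength_pos k

theorem len_swap (k l : ι) : P.pairingIn ℤ l k * len P k = P.pairingIn ℤ k l * len P l :=
  (P.posRootForm ℤ).pairingIn_mul_eq_pairingIn_mul_swap k l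

theorem len_refl (k l : ι) : len P (P.reflectionPerm k l) = len P l := by
  have h := (P.posRootForm ℤ).toInvariantForm.apply_reflection_reflection k (P.root l) (P.root l)
  rw [← P.root_reflectionPerm] at h
  apply (algebraMap ℤ ℂ).injective_int
  simp only [len, RootPairing.RootPositiveForm.algebraMap_rootLength]
  exact h

/-- If `k ≠ l` and `⟨k, l⟩ ≥ 2`, then `k` is longer than `l`, and the pairings of `k` with all
roots `j` of the same length as `l` are divisible by `⟨k, l⟩`. -/
theorem pairing_dvd [P.IsReduced] {k l j : ι} (hkl : k ≠ l) (hp : 2 ≤ P.pairingIn ℤ k l)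
    (hlen : len P l = len P j) :
    P.pairingIn ℤ k j = P.pairingIn ℤ k l * P.pairingIn ℤ j k := by
  have h1 : P.pairingIn ℤ l k = 1 := by
    have h2 := P.pairingIn_pairingIn_mem_set_of_isCrystal_of_isRed k l
    have h3 : ¬ (P.pairingIn ℤ k l = 2 ∧ P.pairingIn ℤ l k = 2) := fun h =>
      hkl ((P.pairingIn_two_two_iff ℤ k l).1 h)
    simp only [Set.mem_insert_iff, Set.mem_singleton_iff, Prod.mk.injEq] at h2
    omega
  have h4 := len_swap P k l
  have h5 := len_swap P k j
  have h6 := len_pos P j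
  rw [h1, one_mul, hlen] at h4
  rw [h4] at h5
  have h7 : (P.pairingIn ℤ k j - P.pairingIn ℤ k l * P.pairingIn ℤ j k) * len P j = 0 := by
    linarith
  rcases mul_eq_zero.1 h7 with h | h
  · linarith
  · omega

variable {P} {a : Fin 7 → ι}

/-- The root `k` of `P` is the combination with coefficients `c` of the roots `a i`, and the same
holds for coroots; moreover `k` has the length of `a 0`. -/
structure Comb (P : RootPairing ι ℂ M N) [P.IsCrystallographic] (a : Fin 7 → ι) (c : Fin 7 → ℤ)
    (k : ι) : Prop where
  root : P.root k = ∑ i, c i • P.root (a i)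
  coroot : P.coroot k = ∑ i, c i • P.coroot (a i)
  len : len P k = len P (a 0)

theorem Comb.pairing {c : Fin 7 → ℤ} {k : ι} (h : Comb P a c k) (l : ι) :
    P.pairingIn ℤ k l = ∑ i, c i * P.pairingIn ℤ (a i) l := by
  apply (algebraMap ℤ ℂ).injective_int
  rw [P.algebraMap_pairingIn, ← P.root_coroot_eq_pairing, h.root]
  simp [pairing_cast, ← zsmul_eq_mul]

theorem Comb.pairing' {c : Fin 7 → ℤ} {k : ι} (h : Comb P a c k) (l : ι) :
    P.pairingIn ℤ l k = ∑ i, c i * P.pairingIn ℤ l (a i) := by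
  apply (algebraMap ℤ ℂ).injective_int
  rw [P.algebraMap_pairingIn, ← P.root_coroot_eq_pairing, h.coroot]
  simp [pairing_cast, ← zsmul_eq_mul]

theorem Comb.unique {c : Fin 7 → ℤ} {k l : ι} (hk : Comb P a c k) (hl : Comb P a c l) : k = l :=
  P.root.injective (hk.root.trans hl.root.symm)

theorem sum_srefl {V : Type*} [AddCommGroup V] (v : Fin 7 → V) (c : Fin 7 → ℤ) (i : Fin 7) :
    ∑ j, srefl E₇ i c j • v j = ∑ j, c j • v j - E₇.mulVec c i • v i := by
  simp only [srefl, Pi.sub_apply, sub_smul, Finset.sum_sub_distrib]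
  congr 1
  rw [Finset.sum_eq_single i]
  · simp
  · intro j _ hj; simp [hj]
  · simp

theorem Comb.mulVec (ha : ∀ i j, P.pairingIn ℤ (a j) (a i) = E₇ i j) {c : Fin 7 → ℤ} {k : ι}
    (h : Comb P a c k) (i : Fin 7) : P.pairingIn ℤ k (a i) = E₇.mulVec c i := by
  rw [h.pairing, Matrix.mulVec, dotProduct]
  exact Finset.sum_congr rfl fun j _ => by rw [ha, mul_comm]

theorem Comb.refl (ha : ∀ i j, P.pairingIn ℤ (a j) (a i) = E₇ i j) {c : Fin 7 → ℤ} {k : ι}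
    (h : Comb P a c k) (i : Fin 7) : Comb P a (srefl E₇ i c) (P.reflectionPerm (a i) k) where
  root := by rw [sum_srefl, root_refl, h.mulVec ha, h.root]
  coroot := by
    have h1 : P.pairingIn ℤ (a i) k = E₇.mulVec c i := by
      rw [h.pairing', Matrix.mulVec, dotProduct]
      exact Finset.sum_congr rfl fun j _ => by rw [ha, mul_comm, A7_symm]
    rw [sum_srefl, P.coroot_reflectionPerm, P.coreflection_apply_coroot, ← h.coroot, pairing_cast,
      h1, Int.cast_smul_eq_zsmul]
  len := by rw [len_refl, h.len]

/-- Every root of `E₇` is realised in `P`. -/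
theorem exists_comb (ha : ∀ i j, P.pairingIn ℤ (a j) (a i) = E₇ i j) {c : Fin 7 → ℤ}
    (hc : IsRoot7 c) : ∃ k, Comb P a c k := by
  refine roots7_connected (R := fun c => ∃ k, Comb P a c k) (fun i c => ⟨?_, ?_⟩)
    (isRoot7_single 0) hc ⟨a 0, ?_, ?_, rfl⟩
  · rintro ⟨k, hk⟩
    exact ⟨_, hk.refl ha i⟩
  · rintro ⟨k, hk⟩
    have := hk.refl ha i
    rw [refl_refl A7_diag] at this
    exact ⟨_, this⟩
  · simp [Pi.single_apply]
  · simp [Pi.single_apply]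

theorem comb_single (ha : ∀ i j, P.pairingIn ℤ (a j) (a i) = E₇ i j) (i : Fin 7) :
    Comb P a (Pi.single i 1) (a i) := by
  obtain ⟨k, hk⟩ := exists_comb ha (isRoot7_single i)
  have : k = a i := P.root.injective (by rw [hk.root]; simp [Pi.single_apply])
  rwa [this] at hk

theorem isRoot7_theta : IsRoot7 theta :=
  Or.inl (digits7_theta ▸ List.mem_map_of_mem (by decide))

theorem mulVec_theta : E₇.mulVec theta = Pi.single 0 1 := by decide +kernel

theorem theta_sum (f : Fin 7 → ℤ) : ∑ i, theta i * f i =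
    2 * f 0 + 2 * f 1 + 3 * f 2 + 4 * f 3 + 3 * f 4 + 2 * f 5 + f 6 := by
  simp [Fin.sum_univ_seven, theta]

variable [P.IsReduced]

/-- Reflecting `a 6` in `b` gives a root of the length of the highest root `t` of `E₇`. If its
pairing with `t` is at most `-2`, it is `-t`, which is orthogonal to `a 5`. -/
theorem not_long (ha : ∀ i j, P.pairingIn ℤ (a j) (a i) = E₇ i j) {t b : ι}
    (ht : Comb P a theta t) (hb : P.pairingIn ℤ b (a 5) = 0)
    (h : 2 ≤ P.pairingIn ℤ (a 6) b * P.pairingIn ℤ b t) : False := by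
  set s := P.reflectionPerm b (a 6)
  have h6 := comb_single ha 6
  have h1 : P.pairingIn ℤ (a 6) t = 0 := by
    rw [ht.pairing', theta_sum, ha, ha, ha, ha, ha, ha, ha]; decide
  have h2 : P.pairingIn ℤ s t ≤ -2 := by rw [pairingIn_refl, h1]; linarith
  have h3 : P.pairingIn ℤ t s = P.pairingIn ℤ s t := by
    have h4 := len_swap P s t
    rw [len_refl, h6.len, ht.len] at h4
    exact mul_right_cancel₀ (len_pos P (a 0)).ne' h4
  have h4 := P.pairingIn_pairingIn_mem_set_of_isCrystal_of_isRed s t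
  simp only [Set.mem_insert_iff, Set.mem_singleton_iff, Prod.mk.injEq] at h4
  have h5 : P.root s = -P.root t :=
    (P.pairingIn_neg_two_neg_two_iff ℤ s t).1 (by omega)
  have h7 : P.pairingIn ℤ s (a 5) = - P.pairingIn ℤ t (a 5) := by
    apply (algebraMap ℤ ℂ).injective_int
    simp only [map_neg, P.algebraMap_pairingIn, ← P.root_coroot_eq_pairing, h5,
      LinearMap.neg_apply]
  rw [pairingIn_refl, ha, hb, ht.mulVec ha, mulVec_theta] at h7
  revert h7
  simp only [mul_zero, sub_zero]
  decide

/-- A root with dominant nonzero restriction to `E₇` is the highest root of `E₇` or restricts to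
the minuscule fundamental weight. -/
theorem dominant (ha : ∀ i j, P.pairingIn ℤ (a j) (a i) = E₇ i j) {t b : ι}
    (ht : Comb P a theta t) (hb : ∀ i, 0 ≤ P.pairingIn ℤ b (a i))
    (hb0 : ∃ i, P.pairingIn ℤ b (a i) ≠ 0) :
    b = t ∨ ∀ i, P.pairingIn ℤ b (a i) = (Pi.single 6 1 : Fin 7 → ℤ) i := by
  refine or_iff_not_imp_left.2 fun hbt => ?_
  have hp : P.pairingIn ℤ b t = _ := (ht.pairing' b).trans (theta_sum _)
  have hpos : 1 ≤ P.pairingIn ℤ b t := by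
    obtain ⟨i, hi⟩ := hb0
    have h0 := hb 0
    have h1 := hb 1
    have h2 := hb 2
    have h3 := hb 3
    have h4 := hb 4
    have h5 := hb 5
    have h6 := hb 6
    have h7 : 1 ≤ P.pairingIn ℤ b (a i) := lt_of_le_of_ne (hb i) hi.symm
    fin_cases i <;> simp at h7 <;> omega
  have key : ∀ m : Fin 7 → ℤ, (∀ i, 0 ≤ m i) →
      2 * m 0 + 2 * m 1 + 3 * m 2 + 4 * m 3 + 3 * m 4 + 2 * m 5 + m 6 = 1 →
      ∀ i, m i = (Pi.single 6 1 : Fin 7 → ℤ) i := by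
    intro m hm h
    have h0 := hm 0
    have h1 := hm 1
    have h2 := hm 2
    have h3 := hm 3
    have h4 := hm 4
    have h5 := hm 5
    have h6 := hm 6
    intro i
    fin_cases i <;> simp <;> omega
  rcases hpos.eq_or_lt with h1 | h1
  · exact key _ hb (by rw [← hp, ← h1])
  · exfalso
    have hdvd : ∀ i, P.pairingIn ℤ b (a i) = P.pairingIn ℤ b t * P.pairingIn ℤ (a i) b :=
      fun i => pairing_dvd P hbt h1 (by rw [ht.len, (comb_single ha i).len])
    have hm : ∀ i, P.pairingIn ℤ (a i) b = (Pi.single 6 1 : Fin 7 → ℤ) i := by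
      apply key (fun i => P.pairingIn ℤ (a i) b)
      · intro i
        have := hb i
        rw [hdvd] at this
        exact nonneg_of_mul_nonneg_right this (by linarith)
      · rw [hdvd 0, hdvd 1, hdvd 2, hdvd 3, hdvd 4, hdvd 5, hdvd 6] at hp
        refine mul_left_cancel₀ (show P.pairingIn ℤ b t ≠ 0 by linarith) ?_
        linarith
    refine not_long ha ht (b := b) ?_ ?_
    · rw [hdvd, hm]; simp
    · rw [hm, Pi.single_eq_same, one_mul]; exact h1

/-- The coefficients of the sum of the positive roots of `E₇`, i.e. of twice the Weyl vector. -/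
def twoRho : Fin 7 → ℤ := ![34, 49, 66, 96, 75, 52, 27]

theorem twoRho_vecMul (i : Fin 7) : ∑ j, twoRho j * E₇ j i = 2 := by
  revert i; decide +kernel

/-- If no root restricts to the minuscule weight, every nonzero restriction is a root of `E₇`. -/
theorem restriction_isRoot (ha : ∀ i j, P.pairingIn ℤ (a j) (a i) = E₇ i j)
    (hno : ∀ b, ¬ ∀ i, P.pairingIn ℤ b (a i) = (Pi.single 6 1 : Fin 7 → ℤ) i) (b : ι)
    (hb0 : ∃ i, P.pairingIn ℤ b (a i) ≠ 0) :
    ∃ c, IsRoot7 c ∧ ∀ i, P.pairingIn ℤ b (a i) = E₇.mulVec c i := by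
  classical
  by_contra hcon
  obtain ⟨t, ht⟩ := exists_comb ha isRoot7_theta
  -- a counterexample of maximal height is dominant
  let S : Finset ι := Finset.univ.filter fun b => (∃ i, P.pairingIn ℤ b (a i) ≠ 0) ∧
    ¬ ∃ c, IsRoot7 c ∧ ∀ i, P.pairingIn ℤ b (a i) = E₇.mulVec c i
  let ht' : ι → ℤ := fun b => ∑ j, twoRho j * P.pairingIn ℤ b (a j)
  obtain ⟨m, hm, hmax⟩ := S.exists_max_image ht' ⟨b, by simp [S, hb0]; simpa using hcon⟩
  obtain ⟨hm0, hm1⟩ := (Finset.mem_filter.1 hm).2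
  have hdom : ∀ i, 0 ≤ P.pairingIn ℤ m (a i) := by
    intro i
    by_contra hneg
    have hr : ∀ j, P.pairingIn ℤ (P.reflectionPerm (a i) m) (a j) =
        P.pairingIn ℤ m (a j) - P.pairingIn ℤ m (a i) * E₇ j i := fun j => by
      rw [pairingIn_refl, ha]
    have hmem : P.reflectionPerm (a i) m ∈ S := by
      refine Finset.mem_filter.2 ⟨Finset.mem_univ _, ⟨i, ?_⟩, ?_⟩
      · rw [hr, A7_diag]; omega
      · rintro ⟨c, hc, h⟩
        refine hm1 ⟨srefl E₇ i c, hc.refl i, fun j => ?_⟩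
        have h1 := h i
        rw [hr, A7_diag] at h1
        have h2 := h j
        rw [hr] at h2
        rw [srefl, Matrix.mulVec_sub, Pi.sub_apply, ← h1, ← h2, Matrix.mulVec_single]
        simp
        ring
    have h1 := hmax _ hmem
    have h2 : ht' (P.reflectionPerm (a i) m) = ht' m - 2 * P.pairingIn ℤ m (a i) := by
      simp only [ht', hr, mul_sub, Finset.sum_sub_distrib]
      rw [← twoRho_vecMul i, Finset.sum_mul]
      congr 1
      exact Finset.sum_congr rfl fun j _ => by ring
    omega
  rcases dominant ha ht hdom hm0 with rfl | h
  · exact hm1 ⟨theta, isRoot7_theta, ht.mulVec ha⟩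
  · exact hno m h

variable [P.IsIrreducible]

/-- If the number of roots plus the rank exceeds `133 = 126 + 7`, its value for `E₇`, then some
root restricts to the minuscule weight. -/
theorem exists_minuscule (ha : ∀ i j, P.pairingIn ℤ (a j) (a i) = E₇ i j)
    (huniq : ∀ b b', (∃ c, IsRoot7 c ∧ ∀ i, P.pairingIn ℤ b (a i) = E₇.mulVec c i) →
      (∀ i, P.pairingIn ℤ b (a i) = P.pairingIn ℤ b' (a i)) → b = b')
    (hcard : 134 ≤ Fintype.card ι + finrank ℂ M) :
    ∃ b, ∀ i, P.pairingIn ℤ b (a i) = (Pi.single 6 1 : Fin 7 → ℤ) i := by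
  classical
  by_contra! hno
  have hno' : ∀ b, ¬ ∀ i, P.pairingIn ℤ b (a i) = (Pi.single 6 1 : Fin 7 → ℤ) i := by
    intro b h
    obtain ⟨i, hi⟩ := hno b
    exact hi (h i)
  have hcomb : ∀ b, (∃ i, P.pairingIn ℤ b (a i) ≠ 0) → ∃ c, IsRoot7 c ∧ Comb P a c b := by
    intro b hb
    obtain ⟨c, hc, h⟩ := restriction_isRoot ha hno' b hb
    obtain ⟨k, hk⟩ := exists_comb ha hc
    have := huniq b k ⟨c, hc, h⟩ fun i => by rw [h, hk.mulVec ha]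
    exact ⟨c, hc, this ▸ hk⟩
  let q : Submodule ℂ M := Submodule.span ℂ (Set.range fun i => P.root (a i))
  have hperp : ∀ b, (∀ i, P.pairingIn ℤ b (a i) = 0) → ∀ x ∈ q, P.coroot' b x = 0 := by
    intro b hb x hx
    induction hx using Submodule.span_induction with
    | mem x hx =>
      obtain ⟨i, rfl⟩ := hx
      change P.coroot' b (P.root (a i)) = 0
      rw [P.root_coroot'_eq_pairing, pairing_cast, P.pairingIn_eq_zero_iff.1 (hb i), Int.cast_zero]
    | zero => simp
    | add x y _ _ hx hy => rw [map_add, hx, hy, add_zero]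
    | smul z x _ hx => rw [map_smul, hx, smul_zero]
  have hq : q = ⊤ := by
    refine RootPairing.IsIrreducible.eq_top_of_invtSubmodule_reflection (P := P) q ?_ ?_
    · intro b x hx
      change P.reflection b x ∈ q
      rw [P.reflection_apply]
      by_cases hb : ∃ i, P.pairingIn ℤ b (a i) ≠ 0
      · obtain ⟨c, -, hk⟩ := hcomb b hb
        refine sub_mem hx (q.smul_mem _ ?_)
        rw [hk.root]
        exact sum_mem fun i _ => zsmul_mem
          (Submodule.subset_span (Set.mem_range_self (f := fun i => P.root (a i)) i)) _
      · push Not at hb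
        rw [hperp b hb x hx, zero_smul, sub_zero]
        exact hx
    · exact (Submodule.ne_bot_iff _).2 ⟨P.root (a 0),
        Submodule.subset_span (Set.mem_range_self (f := fun i => P.root (a i)) 0), P.ne_zero _⟩
  have hall : ∀ b, ∃ c, IsRoot7 c ∧ Comb P a c b := by
    intro b
    refine hcomb b ?_
    by_contra! hb
    have h1 := hperp b hb (P.root b) (hq ▸ Submodule.mem_top)
    rw [P.root_coroot'_eq_pairing, P.pairing_same] at h1
    exact two_ne_zero h1
  choose c hc hk using hall
  have h1 : Fintype.card ι ≤ 126 := by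
    have h2 : Fintype.card ι ≤ rootList7.toFinset.card := by
      refine Finset.card_le_card_of_injOn c (fun b _ => by simpa [mem_rootList7] using hc b)
        (fun b _ b' _ h => ?_)
      have := hk b
      rw [h] at this
      exact this.unique (hk b')
    exact h2.trans ((List.toFinset_card_le _).trans rootList7_length.le)
  have h2 : finrank ℂ M ≤ 7 := by
    rw [← finrank_top, ← hq]
    exact (finrank_range_le_card _).trans_eq (Fintype.card_fin 7)
  omega

/-- The root extending the `E₇` diagram to an `E₈` diagram. -/
theorem exists_extending (ha : ∀ i j, P.pairingIn ℤ (a j) (a i) = E₇ i j)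
    (huniq : ∀ b b', (∃ c, IsRoot7 c ∧ ∀ i, P.pairingIn ℤ b (a i) = E₇.mulVec c i) →
      (∀ i, P.pairingIn ℤ b (a i) = P.pairingIn ℤ b' (a i)) → b = b')
    (hcard : 134 ≤ Fintype.card ι + finrank ℂ M) :
    ∃ b, ∀ i, P.pairingIn ℤ b (a i) = (Pi.single 6 (-1) : Fin 7 → ℤ) i ∧
      P.pairingIn ℤ (a i) b = (Pi.single 6 (-1) : Fin 7 → ℤ) i ∧
      P.root (a i) - P.root b ∉ Set.range P.root := by
  obtain ⟨b', hb'⟩ := exists_minuscule ha huniq hcard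
  obtain ⟨t, ht⟩ := exists_comb ha isRoot7_theta
  let b := P.reflectionPerm b' b'
  have hb : ∀ i, P.pairingIn ℤ b (a i) = (Pi.single 6 (-1) : Fin 7 → ℤ) i := by
    intro i
    rw [P.pairingIn_reflectionPerm_self_left, hb', Pi.single_neg, Pi.neg_apply]
  refine ⟨b, fun i => ⟨hb i, ?_, ?_⟩⟩
  · by_cases hi : i = 6
    · subst hi
      have h1 := P.pairingIn_pairingIn_mem_set_of_isCrystal_of_isRed b (a 6)
      rw [hb, Pi.single_eq_same] at h1
      rw [Pi.single_eq_same]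
      simp only [Set.mem_insert_iff, Set.mem_singleton_iff, Prod.mk.injEq] at h1
      by_contra hne
      refine not_long ha ht (b := b) (by rw [hb]; rfl) ?_
      have h2 : P.pairingIn ℤ b t = -1 := by
        rw [ht.pairing', theta_sum]
        simp only [hb]
        decide
      rw [h2]
      omega
    · have h1 := hb i
      rw [Pi.single_eq_of_ne hi] at h1 ⊢
      exact P.pairingIn_eq_zero_iff.1 h1
  · rintro ⟨k, hk⟩
    have hpair : ∀ j, P.pairingIn ℤ k (a j) = E₇ j i - (Pi.single 6 (-1) : Fin 7 → ℤ) j := by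
      intro j
      have h : P.root k = (1 : ℤ) • P.root (a i) + (-1 : ℤ) • P.root b := by
        rw [hk, one_smul, neg_smul, one_smul, sub_eq_add_neg]
      rw [RootPairing.pairingIn_eq_add_of_root_eq_smul_add_smul h, ha, hb, one_smul, neg_smul,
        one_smul, sub_eq_add_neg]
    have hne : k ≠ a i := by
      rintro rfl
      exact P.ne_zero b (sub_eq_self.1 hk.symm)
    have h2 : 2 ≤ P.pairingIn ℤ k (a i) := by
      rw [hpair]; clear * -; revert i; decide +kernel
    -- a neighbour of `i` other than `6`
    obtain ⟨j, hj⟩ : ∃ j, E₇ j i - (Pi.single 6 (-1) : Fin 7 → ℤ) j = -1 := by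
      clear * -
      revert i; decide +kernel
    have h3 := pairing_dvd P hne h2 (j := a j) (by rw [(comb_single ha i).len,
      (comb_single ha j).len])
    rw [hpair j, hj] at h3
    have h4 : P.pairingIn ℤ k (a i) ∣ 1 := ⟨-P.pairingIn ℤ (a j) k, by linarith⟩
    have h5 := Int.le_of_dvd one_pos h4
    omega

end RootSystem

end E7E8

/-! ### A Cartan subalgebra containing the elements h i -/

namespace E7E8

open LieAlgebra LieModule Chev CartanMatrix Module

section Cartan

variable {n : ℕ} {A : Matrix (Fin n) (Fin n) ℤ} {L : Type*} [LieRing L] [LieAlgebra ℂ L]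

/-- The centralizer of the elements `h i`. -/
def cent (C : Chev A L) : LieSubalgebra ℂ L where
  __ := C.W 0
  lie_mem' {x y} hx hy := by simpa using C.lie_mem_W (χ := 0) (ψ := 0) hx hy

theorem mem_cent (C : Chev A L) {x : L} : x ∈ cent C ↔ ∀ i, ⁅C.h i, x⁆ = 0 := by
  change x ∈ C.W 0 ↔ _
  simp [C.mem_W]

/-- The elements `h i` lie in a Cartan subalgebra of `L`: a Cartan subalgebra of their centralizer
is self-normalizing in `L` because each `ad (h i)` is semisimple at the eigenvalue `0`. -/
theorem exists_cartan [FiniteDimensional ℂ L] (C : Chev A L) (hA : ∀ i, A i i = 2) :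
    ∃ T : LieSubalgebra ℂ L, T.IsCartanSubalgebra ∧ (∀ i, C.h i ∈ T) ∧
      ∀ t ∈ T, ∀ i, ⁅C.h i, t⁆ = 0 := by
  obtain ⟨x, hx⟩ := exists_isCartanSubalgebra_engel ℂ (cent C)
  set H := LieSubalgebra.engel ℂ x
  have hh : ∀ i, C.h i ∈ cent C := fun i => (mem_cent C).2 fun j => C.hh j i
  have hhH : ∀ i, (⟨C.h i, hh i⟩ : cent C) ∈ H := by
    intro i
    rw [← hx.self_normalizing, LieSubalgebra.mem_normalizer_iff]
    intro y _
    have : ⁅(⟨C.h i, hh i⟩ : cent C), y⁆ = 0 := Subtype.ext ((mem_cent C).1 y.2 i)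
    rw [this]
    exact H.zero_mem
  have hcen : ∀ t ∈ H.map (cent C).incl, ∀ i, ⁅C.h i, t⁆ = 0 := by
    rintro _ ⟨t, -, rfl⟩ i
    exact (mem_cent C).1 t.2 i
  refine ⟨H.map (cent C).incl, ⟨?_, ?_⟩, fun i => ⟨⟨C.h i, hh i⟩, hhH i, rfl⟩, hcen⟩
  · have := hx.nilpotent
    let g : H →ₗ⁅ℂ⁆ H.map (cent C).incl :=
      { toFun := fun y => ⟨y.1.1, ⟨y.1, y.2, rfl⟩⟩
        map_add' := fun _ _ => rfl
        map_smul' := fun _ _ => rfl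
        map_lie' := rfl }
    refine Function.Surjective.lieAlgebra_isNilpotent (f := g) ?_
    rintro ⟨_, y, hy, rfl⟩
    exact ⟨⟨y, hy⟩, rfl⟩
  · refine le_antisymm (fun y hy => ?_) (LieSubalgebra.le_normalizer _)
    rw [LieSubalgebra.mem_normalizer_iff] at hy
    have hyc : y ∈ cent C := by
      refine (mem_cent C).2 fun i => ?_
      have h1 : ⁅C.h i, ⁅C.h i, y⁆⁆ = 0 := by
        have h2 := hcen _ (hy _ ⟨⟨C.h i, hh i⟩, hhH i, rfl⟩) i
        change ⁅C.h i, ⁅y, C.h i⁆⁆ = 0 at h2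
        rw [← lie_skew (C.h i) y, lie_neg, h2, neg_zero]
      exact (C.sl2 (hA i)).H_eq_zero (fun x => (C.locNil hA i x).1)
        (fun x => (C.locNil hA i x).2) h1
    refine ⟨⟨y, hyc⟩, ?_, rfl⟩
    change _ ∈ H
    rw [← hx.self_normalizing, LieSubalgebra.mem_normalizer_iff]
    intro z hz
    obtain ⟨w, hw, hw'⟩ := hy z.1 ⟨z, hz, rfl⟩
    have : ⁅(⟨y, hyc⟩ : cent C), z⁆ = w := Subtype.ext hw'.symm
    rwa [this]

variable (T : LieSubalgebra ℂ L) [T.IsCartanSubalgebra]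

/-- A vector spanning a simultaneous eigenspace of the `h i` is a weight vector for any Cartan
subalgebra that centralizes the `h i`. -/
theorem exists_root (C : Chev A L) (hT : ∀ t ∈ T, ∀ i, ⁅C.h i, t⁆ = 0) {χ : Fin n → ℂ}
    (h1 : finrank ℂ (C.W χ) = 1) {x : L} (hx : x ∈ C.W χ) (hx0 : x ≠ 0) :
    ∃ α : Weight ℂ T L, x ∈ rootSpace T α ∧ ∀ t : T, ⁅(t : L), x⁆ = α t • x := by
  have key : ∀ t : T, ∃ c : ℂ, ⁅(t : L), x⁆ = c • x := by
    intro t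
    have ht : ⁅(t : L), x⁆ ∈ C.W χ := by
      have h0 : (t : L) ∈ C.W 0 := C.mem_W.2 fun i => by simp [hT t t.2 i]
      simpa using C.lie_mem_W h0 hx
    obtain ⟨c, hc⟩ := exists_smul_eq_of_finrank_eq_one h1
      (x := ⟨x, hx⟩) (by simpa using hx0) ⟨_, ht⟩
    exact ⟨c, (congrArg Subtype.val hc).symm⟩
  choose c hc using key
  have hmem : x ∈ genWeightSpace L c := by
    refine weightSpace_le_genWeightSpace L c ?_
    rw [mem_weightSpace]
    exact hc
  refine ⟨⟨c, fun h => hx0 ?_⟩, hmem, hc⟩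
  rw [h] at hmem
  simpa using hmem

/-- Root decomposition: root spaces are lines, and the zero weight space is the Cartan subalgebra. -/
theorem finrank_le_card_add [FiniteDimensional ℂ L] [LieAlgebra.IsKilling ℂ L] :
    finrank ℂ L ≤ Fintype.card T.root + finrank ℂ (Dual ℂ T) := by
  classical
  have htop : ⨆ χ : Weight ℂ T L, (genWeightSpace L χ).toSubmodule = ⊤ := by
    rw [← LieSubmodule.iSup_toSubmodule, iSup_genWeightSpace_eq_top', LieSubmodule.top_toSubmodule]
  have h1 : finrank ℂ L ≤ finrank ℂ (DirectSum (Weight ℂ T L)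
      fun χ => (genWeightSpace L χ).toSubmodule) := by
    refine LinearMap.finrank_le_finrank_of_surjective
      (f := DirectSum.coeLinearMap fun χ : Weight ℂ T L => (genWeightSpace L χ).toSubmodule) ?_
    rw [← LinearMap.range_eq_top, ← htop]
    exact DirectSum.range_coeLinearMap
  rw [finrank_directSum] at h1
  refine h1.trans ?_
  rw [← Finset.sum_filter_add_sum_filter_not _ (fun χ : Weight ℂ T L => χ.IsNonZero)]
  gcongr
  · refine (Finset.sum_le_card_nsmul _ _ 1 ?_).trans ?_
    · intro χ hχ
      exact (IsKilling.finrank_rootSpace_eq_one χ (by simpa using hχ)).le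
    · rw [Fintype.card_coe, smul_eq_mul, mul_one]
  · have hzero : ∀ χ ∈ Finset.univ.filter (fun χ : Weight ℂ T L => ¬ χ.IsNonZero),
        (χ : T → ℂ) = 0 := fun χ hχ => not_not.1 (Finset.mem_filter.1 hχ).2
    rw [Subspace.dual_finrank_eq]
    refine (Finset.sum_le_card_nsmul _ _ (finrank ℂ T) ?_).trans ?_
    · intro χ hχ
      rw [hzero χ hχ]
      exact (congrArg (fun N : LieSubmodule ℂ T L => finrank ℂ N.toSubmodule)
        (rootSpace_zero_eq ℂ L T)).le
    · refine (Nat.mul_le_mul_right _ (Finset.card_le_one.2 ?_)).trans (by simp)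
      intro a ha b hb
      exact DFunLike.coe_injective ((hzero a ha).trans (hzero b hb).symm)

end Cartan

end E7E8

/-! ### Extension to an E₈-system and conjugacy -/

namespace E7E8

open LieAlgebra LieModule Chev CartanMatrix Module

section Extension

theorem A8_last_last : E₈ (Fin.last 7) (Fin.last 7) = 2 := rfl

theorem A8_castSucc_last (i : Fin 7) :
    E₈ i.castSucc (Fin.last 7) = (Pi.single 6 (-1) : Fin 7 → ℤ) i := by
  fin_cases i <;> rfl

theorem A8_last_castSucc (i : Fin 7) :
    E₈ (Fin.last 7) i.castSucc = (Pi.single 6 (-1) : Fin 7 → ℤ) i := by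
  fin_cases i <;> rfl

/-- Adjoining an eighth `sl₂`-triple with the right relations to a system of type `E₇`
produces a system of type `E₈`. -/
noncomputable def extend {L : Type*} [LieRing L] [LieAlgebra ℂ L] (C : Chev E₇ L) (h e f : L)
    (hh : ∀ i, ⁅C.h i, h⁆ = 0) (hef : ⁅e, f⁆ = h) (hef1 : ∀ i, ⁅C.e i, f⁆ = 0)
    (hef2 : ∀ i, ⁅e, C.f i⁆ = 0) (he : ⁅h, e⁆ = (2 : ℂ) • e) (hf : ⁅h, f⁆ = -((2 : ℂ) • f))
    (he1 : ∀ i, ⁅h, C.e i⁆ = (E₈ (Fin.last 7) i.castSucc : ℂ) • C.e i)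
    (hf1 : ∀ i, ⁅h, C.f i⁆ = -((E₈ (Fin.last 7) i.castSucc : ℂ) • C.f i))
    (he2 : ∀ i, ⁅C.h i, e⁆ = (E₈ i.castSucc (Fin.last 7) : ℂ) • e)
    (hf2 : ∀ i, ⁅C.h i, f⁆ = -((E₈ i.castSucc (Fin.last 7) : ℂ) • f)) : Chev E₈ L where
  h := Fin.snoc (α := fun _ => L) C.h h
  e := Fin.snoc (α := fun _ => L) C.e e
  f := Fin.snoc (α := fun _ => L) C.f f
  hh i j := by
    induction i using Fin.lastCases <;> induction j using Fin.lastCases <;>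
      simp only [Fin.snoc_last, Fin.snoc_castSucc, lie_self, C.hh, hh]
    rw [← lie_skew, hh, neg_zero]
  ef i := by
    induction i using Fin.lastCases <;> simp only [Fin.snoc_last, Fin.snoc_castSucc, hef, C.ef]
  ef_ne i j hij := by
    induction i using Fin.lastCases <;> induction j using Fin.lastCases <;>
      simp only [Fin.snoc_last, Fin.snoc_castSucc, hef1, hef2]
    · exact absurd rfl hij
    · exact C.ef_ne _ _ fun h => hij (congrArg _ h)
  he i j := by
    induction i using Fin.lastCases <;> induction j using Fin.lastCases <;>
      simp only [Fin.snoc_last, Fin.snoc_castSucc, he1, he2, A8_castSucc, C.he]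
    rw [he, A8_last_last, Int.cast_ofNat]
  hf i j := by
    induction i using Fin.lastCases <;> induction j using Fin.lastCases <;>
      simp only [Fin.snoc_last, Fin.snoc_castSucc, hf1, hf2, A8_castSucc, C.hf]
    rw [hf, A8_last_last, Int.cast_ofNat]

/-- The standard embedding of `e₇` into `e₈`. -/
theorem exists_iota : ∃ ι : e₇ ℂ →ₗ⁅ℂ⁆ e₈ ℂ, (∀ i, ι ((std E₇).e i) = (std E₈).e i.castSucc) ∧
    ∀ i, ι ((std E₇).f i) = (std E₈).f i.castSucc :=
  exists_lift sub7 A7_diag E₇_off_diag_nonpos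

variable [Nontrivial (e₈ ℂ)]

/-- Every `E₇`-system in `e₈` with nonzero vectors `e i` extends to an `E₈`-system. -/
theorem exists_extension (C : Chev E₇ (e₈ ℂ)) (h0 : ∀ i, C.e i ≠ 0) :
    ∃ D : Chev E₈ (e₈ ℂ), (∀ i, D.e (Fin.castSucc i) = C.e i) ∧
      ∀ i, D.f (Fin.castSucc i) = C.f i := by
  have hh0 : ∀ i, C.h i ≠ 0 := by
    intro i h
    have := C.he i i
    rw [h, zero_lie, A7_diag] at this
    rw [Int.cast_ofNat, eq_comm, smul_eq_zero] at this
    exact this.elim two_ne_zero (h0 i)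
  have hf0 : ∀ i, C.f i ≠ 0 := fun i h => hh0 i (by rw [← C.ef, h, lie_zero])
  obtain ⟨T, hTC, hhT, hT⟩ := exists_cartan C A7_diag
  -- the root vectors for `T` given by the generators
  have hα : ∀ i, ∃ α : Weight ℂ T (e₈ ℂ), α.IsNonZero ∧ C.e i ∈ rootSpace T α ∧
      C.f i ∈ rootSpace T (-α) ∧ C.h i = IsKilling.coroot α := by
    intro i
    have r := isRoot7_single i
    have m1 : C.e i ∈ C.W (wt E₇ (Pi.single i 1)) := wt_single (A := E₇) i ▸ C.e_mem_W i
    have m2 : C.f i ∈ C.W (wt E₇ (-Pi.single i 1)) := by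
      rw [wt_neg, wt_single]; exact C.f_mem_W i
    obtain ⟨α, hα, hα'⟩ := exists_root T C hT (finrank_W7_eq_one C (h0 i) r) m1 (h0 i)
    obtain ⟨β, hβ, hβ'⟩ := exists_root T C hT (finrank_W7_eq_one C (h0 i) r.neg) m2 (hf0 i)
    have hβα : (β : T → ℂ) = -α := by
      funext t
      have h1 : ⁅(t : e₈ ℂ), ⁅C.e i, C.f i⁆⁆ = 0 := by
        rw [C.ef, ← lie_skew, hT t t.2, neg_zero]
      rw [leibniz_lie, hα', hβ', smul_lie, lie_smul, C.ef, ← add_smul] at h1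
      exact eq_neg_of_add_eq_zero_right ((smul_eq_zero.1 h1).resolve_right (hh0 i))
    have hα2 : α ⟨C.h i, hhT i⟩ = 2 := by
      have h1 := hα' ⟨C.h i, hhT i⟩
      have h2 := C.he i i
      rw [A7_diag] at h2
      exact smul_left_injective ℂ (h0 i) (h1.symm.trans (by simpa using h2))
    have hnz : α.IsNonZero := by
      intro h
      rw [show α ⟨C.h i, hhT i⟩ = 0 from congrFun h _] at hα2
      norm_num at hα2
    refine ⟨α, hnz, hα, hβα ▸ hβ, ?_⟩
    have htr : IsSl2Triple (C.h i) (C.e i) (C.f i) :=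
      { h_ne_zero := hh0 i
        lie_e_f := C.ef i
        lie_h_e_nsmul := by rw [C.he, A7_diag, Int.cast_ofNat, ofNat_smul_eq_nsmul]
        lie_h_f_nsmul := by rw [C.hf, A7_diag, Int.cast_ofNat, ofNat_smul_eq_nsmul] }
    exact htr.h_eq_coroot hnz hα (hβα ▸ hβ)
  choose α hnz heα hfα hcor using hα
  let a : Fin 7 → T.root := fun i => ⟨α i, by simpa using hnz i⟩
  let P := IsKilling.rootSystem T
  -- a root vector for `T` lies in the simultaneous eigenspace of the `h i` given by the pairings
  have hpair : ∀ (b : T.root) (i : Fin 7) (x : e₈ ℂ), x ∈ rootSpace T b.1 →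
      ⁅C.h i, x⁆ = (P.pairingIn ℤ b (a i) : ℂ) • x := by
    intro b i x hx
    rw [← pairing_cast, hcor i]
    exact IsKilling.lie_eq_smul_of_mem_rootSpace hx _
  have ha : ∀ i j, P.pairingIn ℤ (a j) (a i) = E₇ i j := by
    intro i j
    have h1 := hpair (a j) i (C.e j) (heα j)
    rw [C.he] at h1
    exact_mod_cast (smul_left_injective ℂ (h0 j) h1).symm
  have huniq : ∀ b b', (∃ c, IsRoot7 c ∧ ∀ i, P.pairingIn ℤ b (a i) = E₇.mulVec c i) →
      (∀ i, P.pairingIn ℤ b (a i) = P.pairingIn ℤ b' (a i)) → b = b' := by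
    rintro b b' ⟨c, hc, hbc⟩ hbb'
    have hW : ∀ d : T.root, (∀ i, P.pairingIn ℤ d (a i) = E₇.mulVec c i) → ∀ x,
        x ∈ rootSpace T d.1 → x ∈ C.W (wt E₇ c) := by
      intro d hd x hx
      exact C.mem_W.2 fun i => by rw [hpair d i x hx, hd]; rfl
    obtain ⟨x, hx, hx0⟩ := b.1.exists_ne_zero
    obtain ⟨y, hy, hy0⟩ := b'.1.exists_ne_zero
    obtain ⟨s, hs⟩ := exists_smul_eq_of_finrank_eq_one (finrank_W7_eq_one C (h0 0) hc)
      (x := ⟨x, hW b hbc x hx⟩) (by simpa using hx0)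
      ⟨y, hW b' (fun i => (hbb' i).symm.trans (hbc i)) y hy⟩
    have hs' : s • x = y := congrArg Subtype.val hs
    have hyb : y ∈ rootSpace T b.1 := hs' ▸ (rootSpace T b.1).smul_mem s hx
    apply Subtype.ext
    apply DFunLike.coe_injective
    funext t
    exact smul_left_injective ℂ hy0 ((IsKilling.lie_eq_smul_of_mem_rootSpace hyb t).symm.trans
      (IsKilling.lie_eq_smul_of_mem_rootSpace hy t))
  obtain ⟨b, hb⟩ := exists_extending ha huniq (e8_finrank_ge.trans (finrank_le_card_add T))
  have hbnz : b.1.IsNonZero := T.isNonZero_coe_root b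
  obtain ⟨h, e, f, htr, heb, hfb⟩ := IsKilling.exists_isSl2Triple_of_weight_isNonZero hbnz
  have hhb := htr.h_eq_coroot hbnz heb hfb
  -- the difference `α i - b` is neither a root nor zero
  have hbot : ∀ i, rootSpace T ((α i : T → ℂ) - b.1) = ⊥ := by
    intro i
    by_contra hne
    let γ : Weight ℂ T (e₈ ℂ) := ⟨_, hne⟩
    by_cases hγ : γ.IsZero
    · have h1 : (α i : T → ℂ) = b.1 := sub_eq_zero.1 hγ
      have h2 : a i = b := Subtype.ext (DFunLike.coe_injective h1)
      have h3 := (hb i).1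
      rw [← h2, ha, A7_diag] at h3
      clear * - h3
      fin_cases i <;> revert h3 <;> decide
    · refine (hb i).2.2 ⟨⟨γ, by simpa using hγ⟩, ?_⟩
      ext t
      rfl
  have hbot' : ∀ i, rootSpace T (-((α i : T → ℂ) - b.1)) = ⊥ := by
    intro i
    by_contra hne
    have := (-(⟨_, hne⟩ : Weight ℂ T (e₈ ℂ))).genWeightSpace_ne_bot
    refine this ?_
    rw [Weight.coe_neg, Weight.coe_weight_mk, neg_neg]
    exact hbot i
  refine ⟨extend C h e f ?_ htr.lie_e_f ?_ ?_ ?_ ?_ ?_ ?_ ?_ ?_, ?_, ?_⟩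
  · intro i
    exact hT h (hhb ▸ Subtype.property _) i
  · intro i
    have := lie_mem_genWeightSpace_of_mem_genWeightSpace (heα i) hfb
    rw [← sub_eq_add_neg] at this
    exact (LieSubmodule.mem_bot _).1 ((hbot i).le this)
  · intro i
    have := lie_mem_genWeightSpace_of_mem_genWeightSpace heb (hfα i)
    rw [← sub_eq_add_neg, ← neg_sub] at this
    exact (LieSubmodule.mem_bot _).1 ((hbot' i).le this)
  · rw [htr.lie_h_e_nsmul, two_smul, two_smul]
  · rw [htr.lie_h_f_nsmul, two_smul, two_smul]
  · intro i
    rw [A8_last_castSucc, ← (hb i).2.1, ← pairing_cast, hhb]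
    exact IsKilling.lie_eq_smul_of_mem_rootSpace (heα i) _
  · intro i
    rw [A8_last_castSucc, ← (hb i).2.1, ← pairing_cast, hhb, ← neg_smul]
    exact IsKilling.lie_eq_smul_of_mem_rootSpace (hfα i) _
  · intro i
    rw [A8_castSucc_last, ← (hb i).1]
    exact hpair b i e heb
  · intro i
    rw [A8_castSucc_last, ← (hb i).1, ← pairing_cast, hcor i, ← neg_smul]
    exact IsKilling.lie_eq_smul_of_mem_rootSpace hfb _
  · intro i
    exact Fin.snoc_castSucc (α := fun _ => e₈ ℂ) _ _ _
  · intro i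
    exact Fin.snoc_castSucc (α := fun _ => e₈ ℂ) _ _ _

/-- Every nonzero endomorphism of the simple Lie algebra `e₈` is an automorphism. -/
theorem exists_equiv (ψ : e₈ ℂ →ₗ⁅ℂ⁆ e₈ ℂ) {x : e₈ ℂ} (hx : ψ x ≠ 0) :
    ∃ φ : e₈ ℂ ≃ₗ⁅ℂ⁆ e₈ ℂ, ∀ y, φ y = ψ y := by
  have hinj : Function.Injective ψ := by
    rw [← LieHom.ker_eq_bot]
    refine (IsSimple.eq_bot_or_eq_top ψ.ker).resolve_right fun h => hx ?_
    rw [← LieHom.mem_ker, h]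
    exact LieSubmodule.mem_top x
  have hsurj : Function.Surjective ψ :=
    (LinearMap.injective_iff_surjective (f := (ψ : e₈ ℂ →ₗ[ℂ] e₈ ℂ))).1 hinj
  exact ⟨LieEquiv.ofBijective ψ ⟨hinj, hsurj⟩, fun _ => rfl⟩

/-- Every embedding of `e₇` is the standard one followed by an automorphism of `e₈`. -/
theorem exists_conj (ι : e₇ ℂ →ₗ⁅ℂ⁆ e₈ ℂ) (hι : ∀ i, ι ((std E₇).e i) = (std E₈).e i.castSucc)
    (hι' : ∀ i, ι ((std E₇).f i) = (std E₈).f i.castSucc) (ε : e₇ ℂ →ₗ⁅ℂ⁆ e₈ ℂ)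
    (hε : Function.Injective ε) : ∃ φ : e₈ ℂ ≃ₗ⁅ℂ⁆ e₈ ℂ, ∀ x, ε x = φ (ι x) := by
  let C : Chev E₇ (e₈ ℂ) :=
    { h := fun i => ε ((std E₇).h i)
      e := fun i => ε ((std E₇).e i)
      f := fun i => ε ((std E₇).f i)
      hh := fun i j => by rw [← ε.map_lie, (std E₇).hh, map_zero]
      ef := fun i => by rw [← ε.map_lie, (std E₇).ef]
      ef_ne := fun i j hij => by rw [← ε.map_lie, (std E₇).ef_ne i j hij, map_zero]
      he := fun i j => by rw [← ε.map_lie, (std E₇).he, map_smul]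
      hf := fun i j => by rw [← ε.map_lie, (std E₇).hf, map_neg, map_smul] }
  have h0 : ∀ i, C.e i ≠ 0 := by
    intro i h
    have h1 : (std E₇).e i = 0 := hε (h.trans (map_zero ε).symm)
    exact e8_e_ne i.castSucc (by rw [← hι, h1, map_zero])
  obtain ⟨D, hDe, hDf⟩ := exists_extension C h0
  obtain ⟨ψ, hψe, hψf⟩ := exists_lift D A8_diag E₈_off_diag_nonpos
  obtain ⟨φ, hφ⟩ := exists_equiv ψ (x := (std E₈).e (Fin.castSucc 0))
    (by rw [hψe, hDe]; exact h0 0)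
  have h1 : ε = ψ.comp ι := hom_ext
    (fun i => by rw [LieHom.comp_apply, hι, hψe, hDe])
    (fun i => by rw [LieHom.comp_apply, hι', hψf, hDf])
  exact ⟨φ, fun x => by rw [hφ, h1, LieHom.comp_apply]⟩

end Extension

end E7E8

/-- Any two injective Lie algebra homomorphisms from LieAlgebra.e₇ ℂ to LieAlgebra.e₈ ℂ are
conjugate by a Lie algebra automorphism of the codomain. -/
theorem stmt_19 (ε ε' : LieAlgebra.e₇ ℂ →ₗ⁅ℂ⁆ LieAlgebra.e₈ ℂ)
    (hε : Function.Injective ε) (hε' : Function.Injective ε') :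
    ∃ φ : LieAlgebra.e₈ ℂ ≃ₗ⁅ℂ⁆ LieAlgebra.e₈ ℂ, ∀ x : LieAlgebra.e₇ ℂ, ε' x = φ (ε x) := by
  rcases subsingleton_or_nontrivial (LieAlgebra.e₈ ℂ) with _ | _
  · exact ⟨LieEquiv.refl, fun x => Subsingleton.elim _ _⟩
  obtain ⟨ι, hι, hι'⟩ := E7E8.exists_iota
  obtain ⟨φ, hφ⟩ := E7E8.exists_conj ι hι hι' ε hε
  obtain ⟨φ', hφ'⟩ := E7E8.exists_conj ι hι hι' ε' hε'
  exact ⟨φ.symm.trans φ', fun x => by simp [hφ, hφ']⟩
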